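/- arXiv:2107.02724 — 2 statements merged into one kernel-verified Lean document; each statement's English description precedes it below -/
import Mathlib

section
/- Let n ≥ 1, let G be a subgroup of the symmetric group S_n, and let C be a left coset of G in S_n. If the proportion of derangements in C equals the proportion of derangements in S_n, i.e., |{σ ∈ C : σ has no fixed points}| / |C| = D_n / n!, then G = S_n (and hence C = S_n). -/
section Helpers
open MulAction
open scoped Pointwise

lemma dvd_der_aux1 (n : ℕ) : ∃ e : ℤ, (e = 1 ∨ e = -1) ∧
    (numDerangements (n+1) : ℤ) = (n+1) * numDerangements n + e := by
  rw [numDerangements_succ]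
  rcases neg_one_pow_eq_or ℤ n with h | h
  · exact ⟨-1, Or.inr rfl, by rw [h]; ring⟩
  · exact ⟨1, Or.inl rfl, by rw [h]; ring⟩

lemma der_n (n p : ℕ) (hp : p.Prime) (hn : 1 ≤ n) (h : p ∣ n) : ¬ p ∣ numDerangements n := by
  obtain ⟨m, rfl⟩ : ∃ m, n = m + 1 := ⟨n - 1, by omega⟩
  intro hd
  obtain ⟨e, he, h1⟩ := dvd_der_aux1 m
  have hpp := hp.two_le
  have a : (p : ℤ) ∣ e := by
    have h2 : e = numDerangements (m+1) - ((m+1 : ℕ) : ℤ) * numDerangements m := by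
      rw [h1]; push_cast; ring
    rw [h2]
    exact dvd_sub (by exact_mod_cast hd) (Dvd.dvd.mul_right (by exact_mod_cast h) _)
  have := Int.natAbs_dvd_natAbs.mpr a
  rcases he with rfl | rfl <;> simp at this <;> omega

lemma der_n2 (n p : ℕ) (hp : p.Prime) (hn : 3 ≤ n) (h : p ∣ n - 2) :
    ¬ p ∣ numDerangements n := by
  obtain ⟨m, rfl⟩ : ∃ m, n = m + 3 := ⟨n - 3, by omega⟩
  intro hd
  have h3 := numDerangements_succ (m+2)
  have a3 := numDerangements_add_two m
  have hpp := hp.two_le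
  have h' : (p : ℤ) ∣ (m + 1 : ℤ) := by exact_mod_cast h
  have a : (p : ℤ) ∣ (-1)^(m+2) := by
    have h2 : ((-1)^(m+2) : ℤ) = (m+1) * ((m+3) * (numDerangements m + numDerangements (m+1)))
        - numDerangements (m+3) := by
      rw [h3, a3]; push_cast; ring
    rw [h2]
    exact dvd_sub (Dvd.dvd.mul_right h' _) (by exact_mod_cast hd)
  have := Int.natAbs_dvd_natAbs.mpr a
  simp [Int.natAbs_pow] at this
  omega

lemma der_n3 (n p : ℕ) (hp : p.Prime) (hp2 : p ≠ 2) (hn : 4 ≤ n) (h : p ∣ n - 3) :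
    ¬ p ∣ numDerangements n := by
  obtain ⟨m, rfl⟩ : ∃ m, n = m + 4 := ⟨n - 4, by omega⟩
  intro hd
  have h4 := numDerangements_succ (m+3)
  have h3 := numDerangements_succ (m+2)
  have a3 := numDerangements_add_two m
  have hpp := hp.two_le
  have h' : (p : ℤ) ∣ (m + 1 : ℤ) := by exact_mod_cast h
  have a : (p : ℤ) ∣ 2 * (-1)^m := by
    have h2 : (2 * (-1)^m : ℤ) = (m+1) * ((m+4) * (m+3) * (numDerangements m + numDerangements (m+1)) - (-1)^m)
        - numDerangements (m+4) := by
      rw [h4, h3, a3]; push_cast; ring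
    rw [h2]
    exact dvd_sub (Dvd.dvd.mul_right h' _) (by exact_mod_cast hd)
  have := Int.natAbs_dvd_natAbs.mpr a
  simp [Int.natAbs_pow, Int.natAbs_mul] at this
  exact hp2 ((Nat.prime_dvd_prime_iff_eq hp Nat.prime_two).mp this)

lemma der_n4 (n p : ℕ) (hp : p.Prime) (hp3 : p ≠ 3) (hn : 5 ≤ n) (h : p ∣ n - 4) :
    ¬ p ∣ numDerangements n := by
  obtain ⟨m, rfl⟩ : ∃ m, n = m + 5 := ⟨n - 5, by omega⟩
  intro hd
  have h5 := numDerangements_succ (m+4)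
  have h4 := numDerangements_succ (m+3)
  have h3 := numDerangements_succ (m+2)
  have a3 := numDerangements_add_two m
  have hpp := hp.two_le
  have h' : (p : ℤ) ∣ (m + 1 : ℤ) := by exact_mod_cast h
  have a : (p : ℤ) ∣ 9 * (-1)^m := by
    have h2 : (9 * (-1)^m : ℤ) = (m+1) * ((m+5) * (m+4) * (m+3) * (numDerangements m + numDerangements (m+1)) - (m + 7) * (-1)^m)
        - numDerangements (m+5) := by
      rw [h5, h4, h3, a3]; push_cast; ring
    rw [h2]
    exact dvd_sub (Dvd.dvd.mul_right h' _) (by exact_mod_cast hd)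
  have := Int.natAbs_dvd_natAbs.mpr a
  simp [Int.natAbs_pow, Int.natAbs_mul] at this
  have h9 : p ∣ 3 ^ 2 := by simpa using this
  exact hp3 ((Nat.prime_dvd_prime_iff_eq hp Nat.prime_three).mp (hp.dvd_of_dvd_pow h9))

lemma exists_conj_mem {Γ : Type*} [Group Γ] [Finite Γ] (G H : Subgroup Γ) (p : ℕ) (hp : p.Prime)
    (hG : ¬ p ∣ G.index) (hH : IsPGroup p H) : ∃ g : Γ, ∀ h ∈ H, g⁻¹ * h * g ∈ G := by
  have := Fact.mk hp
  obtain ⟨x, hx⟩ := hH.nonempty_fixed_point_of_prime_not_dvd_card (Γ ⧸ G) hG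
  obtain ⟨g, rfl⟩ := QuotientGroup.mk_surjective x
  refine ⟨g, fun h hh => ?_⟩
  have := hx ⟨h, hh⟩
  have h2 : ((h * g : Γ) : Γ ⧸ G) = (g : Γ ⧸ G) := this
  rw [eq_comm, QuotientGroup.eq] at h2
  rwa [mul_assoc]

/-- A cycle of prime power length in `G`. -/
lemma exists_cycle {n : ℕ} (G : Subgroup (Equiv.Perm (Fin n))) (p e : ℕ) (hp : p.Prime)
    (hG : ¬ p ∣ G.index) (he : 1 ≤ e) (hpe : p ^ e ≤ n) :
    ∃ c ∈ G, c.IsCycle ∧ c.support.card = p ^ e := by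
  obtain ⟨c, hc⟩ := (Equiv.Perm.exists_with_cycleType_iff (Fin n) (m := {p^e})).mpr
    ⟨by simpa using hpe, by
      intro a ha
      simp at ha
      subst ha
      calc 2 ≤ p := hp.two_le
        _ = p ^ 1 := by simp
        _ ≤ p ^ e := Nat.pow_le_pow_right hp.pos he⟩
  have hcyc : c.IsCycle := by
    rw [← Equiv.Perm.card_cycleType_eq_one, hc]; simp
  have hcard : c.support.card = p ^ e := by
    rw [← Equiv.Perm.sum_cycleType, hc]; simp
  have hH : IsPGroup p (Subgroup.zpowers c) := by
    apply IsPGroup.of_card (n := e)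
    rw [Nat.card_zpowers, hcyc.orderOf, hcard]
  obtain ⟨g, hg⟩ := exists_conj_mem G _ p hp hG hH
  have := hg c (Subgroup.mem_zpowers c)
  refine ⟨_, this, ?_, ?_⟩
  · simpa using hcyc.conj (g := g⁻¹)
  · rw [← hcard]
    have := Equiv.Perm.card_support_conj (σ := g⁻¹) (τ := c)
    simpa using this

/-- transitivity -/
lemma trans_of_coprime {n : ℕ} (hn : 1 ≤ n) (G : Subgroup (Equiv.Perm (Fin n)))
    (hG : Nat.Coprime n G.index) : IsPretransitive G (Fin n) := by
  have x : Fin n := ⟨0, by omega⟩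
  set S := stabilizer (Equiv.Perm (Fin n)) x
  have h1 : S.index = n := by
    simpa using index_stabilizer_of_transitive (Equiv.Perm (Fin n)) x
  have h2 : (S ⊓ G).relIndex G = (orbit G x).ncard := by
    rw [← index_stabilizer, Subgroup.relIndex]
    congr 1
    ext g
    simp [S, Subgroup.mem_subgroupOf]
    rfl
  have h3 : (S ⊓ G).relIndex G * G.index = (S ⊓ G).index :=
    Subgroup.relIndex_mul_index inf_le_right
  have h4 : S.index ∣ (S ⊓ G).index := Subgroup.index_dvd_of_le inf_le_left
  rw [h1, ← h3, h2] at h4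
  have h5 : n ∣ (orbit G x).ncard := hG.dvd_of_dvd_mul_right h4
  have h6 : (orbit G x).ncard = n := by
    apply le_antisymm
    · simpa using Set.ncard_le_card (orbit G x)
    · refine Nat.le_of_dvd ?_ h5
      rw [Set.ncard_pos]
      exact ⟨x, mem_orbit_self x⟩
  have h7 : orbit G x = Set.univ := by
    rw [Set.eq_univ_iff_ncard]
    simpa using h6
  exact (isPretransitive_iff_orbit_eq_univ x).mpr h7

/-- binomial divides the index -/
lemma choose_dvd_index {n : ℕ} (G : Subgroup (Equiv.Perm (Fin n))) [IsPretransitive G (Fin n)]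
    (B : Set (Fin n)) (hB : IsBlock G B) (hne : B.Nonempty) :
    (n - 1).choose (B.ncard - 1) ∣ G.index := by
  set k := B.ncard with hk
  have hk0 : 0 < k := by rw [hk, Set.ncard_pos]; exact hne
  set S := stabilizer (Equiv.Perm (Fin n)) B
  have h1 : S.index = n.choose k := by
    classical
    have hcard : B.toFinite.toFinset.card = k := by
      rw [hk, Set.ncard_eq_toFinset_card B]
    let s : Set.powersetCard (Fin n) k := Set.powersetCard.ofCard hcard
    have hs : (s : Set (Fin n)) = B := by
      ext x
      change x ∈ B.toFinite.toFinset ↔ _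
      simp
    have ht : IsPretransitive (Equiv.Perm (Fin n)) (Set.powersetCard (Fin n) k) :=
      Set.powersetCard.isPretransitive
    have h := index_stabilizer_of_transitive (Equiv.Perm (Fin n)) s
    rw [Set.powersetCard.stabilizer_coe, hs, Set.powersetCard.card] at h
    simpa using h
  have h2 : (S ⊓ G).relIndex G = (orbit G B).ncard := by
    rw [← index_stabilizer, Subgroup.relIndex]
    congr 1
    ext g
    simp [S, Subgroup.mem_subgroupOf]
    rfl
  have h3 : (S ⊓ G).relIndex G * G.index = (S ⊓ G).index :=
    Subgroup.relIndex_mul_index inf_le_right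
  have h4 : S.index ∣ (S ⊓ G).index := Subgroup.index_dvd_of_le inf_le_left
  have h5 := hB.ncard_block_mul_ncard_orbit_eq hne
  rw [← hk, ← h2] at h5
  rw [h1, ← h3] at h4
  set m := (S ⊓ G).relIndex G
  have hn : n = k * m := by simpa using h5.symm
  have hn0 : 0 < n := by
    obtain ⟨x, _⟩ := hne
    exact x.pos
  have hm : 0 < m := by
    rcases Nat.eq_zero_or_pos m with h | h
    · simp [h] at hn; omega
    · exact h
  have h6 := Nat.add_one_mul_choose_eq (n - 1) (k - 1)
  rw [Nat.sub_add_cancel hn0, Nat.sub_add_cancel hk0] at h6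
  have h7 : n.choose k = m * (n-1).choose (k-1) := by
    apply Nat.eq_of_mul_eq_mul_right hk0
    rw [← h6]
    nth_rewrite 1 [hn]
    ring
  rw [h7] at h4
  exact Nat.dvd_of_mul_dvd_mul_left hm h4

lemma block_cycle {n : ℕ} (G : Subgroup (Equiv.Perm (Fin n))) [IsPretransitive G (Fin n)]
    (B : Set (Fin n)) (hB : IsBlock G B) (hne : B.Nonempty) (c : Equiv.Perm (Fin n)) (hc : c ∈ G)
    (hcyc : c.IsCycle) : B.ncard ∣ c.support.card ∨ c.support.card ≤ B.ncard := by
  by_cases h : ∃ g : G, (⟨c, hc⟩ : G) • (g • B) ≠ g • B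
  · left
    obtain ⟨g, hg⟩ := h
    have hB' := hB.translate g
    have hn' : (g • B).ncard = B.ncard := Set.ncard_smul_set _ _
    rw [← hn']
    have hne' : (g • B).Nonempty := hne.smul_set
    generalize g • B = B' at hg hB' hne'
    have hdis : Disjoint ((⟨c, hc⟩ : G) • B') B' := by
      rcases (isBlock_iff_smul_eq_or_disjoint.mp hB') ⟨c, hc⟩ with h | h
      · exact absurd h hg
      · exact h
    have hmov : ∀ b ∈ B', c b ≠ b := by
      intro b hb hcb
      exact Set.disjoint_left.mp hdis ⟨b, hb, hcb⟩ hb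
    obtain ⟨b0, hb0⟩ := hne'
    set Z := Subgroup.zpowers c
    let K := stabilizer Z B'
    have horb : B' = orbit K b0 := by
      ext b
      constructor
      · intro hb
        obtain ⟨i, hi⟩ := hcyc.exists_zpow_eq (hmov b0 hb0) (hmov b hb)
        have hz : (c ^ i) ∈ Z := Subgroup.zpow_mem _ (Subgroup.mem_zpowers c) i
        have hG' : (c ^ i) ∈ G := Subgroup.zpow_mem _ hc i
        have hst : (⟨c ^ i, hz⟩ : Z) ∈ K := by
          rw [mem_stabilizer_iff]
          have h1 := (isBlock_iff_smul_eq_of_mem.mp hB') (g := ⟨c ^ i, hG'⟩) hb0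
            (by change (c ^ i) b0 ∈ B'; rwa [hi])
          exact h1
        exact ⟨⟨_, hst⟩, hi⟩
      · rintro ⟨⟨z, hz⟩, rfl⟩
        have hz' : z • B' = B' := hz
        have : z • b0 ∈ z • B' := Set.smul_mem_smul_set hb0
        rw [hz'] at this
        exact this
    rw [horb, ← index_stabilizer, ← hcyc.orderOf, ← Nat.card_zpowers]
    exact (Subgroup.index_dvd_card _).trans (Subgroup.card_subgroup_dvd_card K)
  · right
    push Not at h
    obtain ⟨x, hx, hxc⟩ := hcyc
    obtain ⟨b, hb⟩ := hne
    obtain ⟨g, hg⟩ := exists_smul_eq G b x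
    have hxB : x ∈ g • B := hg ▸ Set.smul_mem_smul_set hb
    have hst : (⟨c, hc⟩ : G) ∈ stabilizer G (g • B) := h g
    have hsub : (c.support : Set (Fin n)) ⊆ g • B := by
      intro y hy
      obtain ⟨i, rfl⟩ := hxc (Equiv.Perm.mem_support.mp hy)
      have h1 : (⟨c, hc⟩ : G) ^ i • (g • B) = g • B := Subgroup.zpow_mem _ hst i
      have h2 : (⟨c, hc⟩ : G) ^ i • x ∈ (⟨c, hc⟩ : G) ^ i • (g • B) := Set.smul_mem_smul_set hxB
      rw [h1] at h2
      exact h2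
    have := Set.ncard_le_ncard hsub (Set.toFinite _)
    rw [Set.ncard_coe_finset] at this
    rwa [Set.ncard_smul_set] at this

/-- Data on a nontrivial block. -/
lemma block_pow {n : ℕ} (G : Subgroup (Equiv.Perm (Fin n))) [IsPretransitive G (Fin n)]
    (B : Set (Fin n)) (hB : IsBlock G B) (hne : B.Nonempty) (p : ℕ) (hp : p.Prime)
    (hpn : p ≤ n) (hG : ¬ p ∣ G.index) :
    (∃ e, B.ncard ∣ p ^ e) ∨ n < p * B.ncard := by
  have hlog : 1 ≤ Nat.log p n := Nat.log_pos hp.one_lt hpn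
  have hle : p ^ Nat.log p n ≤ n := Nat.pow_log_le_self p (by have := hp.two_le; omega)
  have hlt : n < p ^ (Nat.log p n + 1) := Nat.lt_pow_succ_log_self hp.one_lt n
  obtain ⟨c, hc, hcyc, hcard⟩ := exists_cycle G p _ hp hG hlog hle
  rcases block_cycle G B hB hne c hc hcyc with h | h
  · left; exact ⟨_, hcard ▸ h⟩
  · right
    rw [hcard] at h
    calc n < p ^ (Nat.log p n + 1) := hlt
      _ = p * p ^ Nat.log p n := by rw [pow_succ, mul_comm]
      _ ≤ p * B.ncard := Nat.mul_le_mul_left _ h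

/-- numeric core for `q ∣ n - 2` -/
lemma numeric_q (n k m q : ℕ) (hq : q.Prime) (hq2 : q ≠ 2) (hn : 3 ≤ n) (hkm : n = k * m)
    (hk : 2 ≤ k) (hm : 2 ≤ m) (hqn : q ∣ n - 2) (hmq : m < q)
    (hch : ¬ q ∣ (n - 1).choose (k - 1)) : m = 2 := by
  obtain ⟨a, rfl⟩ : ∃ a, k = a + 2 := ⟨k - 2, by omega⟩
  have hkn : a + 2 + 2 ≤ n := by rw [hkm]; nlinarith
  obtain ⟨b, hb⟩ : ∃ b, n = a + b + 3 := ⟨n - a - 3, by omega⟩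
  have h1 := Nat.add_one_mul_choose_eq (a + b + 1) a
  have h2 := Nat.choose_mul_succ_eq (a+b) a
  have key : q ∣ (n - 1).choose (a + 2 - 1) * ((a + 1) * (b + 1)) := by
    have e1 : n - 1 = a + b + 1 + 1 := by omega
    have e2 : a + 2 - 1 = a + 1 := by omega
    rw [e1, e2, ← mul_assoc, ← h1]
    have e3 : a + b + 1 - a = b + 1 := by omega
    rw [e3] at h2
    rw [mul_assoc, ← h2]
    have : q ∣ a + b + 1 := by
      have : n - 2 = a + b + 1 := by omega
      rwa [this] at hqn
    exact Dvd.dvd.mul_left (Dvd.dvd.mul_left this _) _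
  have hq2' := hq.two_le
  rcases (hq.dvd_mul.mp key) with h | h
  · exact absurd h hch
  have hz : (q : ℤ) ∣ (n : ℤ) - 2 := by
    have := Int.natCast_dvd_natCast.mpr hqn
    rwa [Nat.cast_sub (by omega)] at this
  have hkm' : (n : ℤ) = (a + 2) * m := by exact_mod_cast hkm
  rcases (hq.dvd_mul.mp h) with h | h
  · -- k ≡ 1
    have h' : (q : ℤ) ∣ (a + 1 : ℤ) := by exact_mod_cast h
    have : (q : ℤ) ∣ ((m - 2 : ℕ) : ℤ) := by
      rw [Nat.cast_sub hm]
      have : (m : ℤ) - (2:ℕ) = (n - 2) - (a + 1) * m := by rw [hkm']; push_cast; ring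
      rw [this]
      exact dvd_sub hz (Dvd.dvd.mul_right h' _)
    have h3 := Int.natCast_dvd_natCast.mp this
    have := Nat.eq_zero_of_dvd_of_lt h3 (by omega)
    omega
  · exfalso
    have h' : (q : ℤ) ∣ (b + 1 : ℤ) := by exact_mod_cast h
    have hbb : (n : ℤ) = a + b + 3 := by exact_mod_cast hb
    have ha : (q : ℤ) ∣ (a : ℤ) := by
      have : (a : ℤ) = (n - 2) - (b + 1) := by rw [hbb]; ring
      rw [this]; exact dvd_sub hz h'
    have : (q : ℤ) ∣ ((2 * (m - 1) : ℕ) : ℤ) := by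
      rw [Nat.cast_mul, Nat.cast_sub (by omega)]
      have : ((2 : ℕ) : ℤ) * ((m : ℤ) - (1:ℕ)) = (n - 2) - a * m := by rw [hkm']; push_cast; ring
      rw [this]
      exact dvd_sub hz (Dvd.dvd.mul_right ha _)
    have h3 := Int.natCast_dvd_natCast.mp this
    rcases (hq.dvd_mul.mp h3) with h4 | h4
    · exact hq2 ((Nat.prime_dvd_prime_iff_eq hq Nat.prime_two).mp h4)
    · have := Nat.le_of_dvd (by omega) h4
      omega

/-- numeric core for `r ∣ n - 3`, two blocks -/
lemma numeric_r (k r : ℕ) (hr : r.Prime) (hk : 3 ≤ k) (hr3 : r ∣ 2 * k - 3) (hr33 : r ≠ 3)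
    (hch : ¬ r ∣ (2 * k - 1).choose (k - 1)) : False := by
  obtain ⟨a, rfl⟩ : ∃ a, k = a + 3 := ⟨k - 3, by omega⟩
  have h1 := Nat.add_one_mul_choose_eq (2*a+4) (a+1)
  have h2 := Nat.add_one_mul_choose_eq (2*a+3) a
  have h3 := Nat.choose_mul_succ_eq (2*a+2) a
  have e3 : 2 * a + 2 + 1 - a = a + 3 := by omega
  rw [e3] at h3
  have key : r ∣ (2 * (a+3) - 1).choose (a + 3 - 1) * ((a + 2) * (a + 1) * (a + 3)) := by
    have e1 : 2 * (a + 3) - 1 = 2 * a + 4 + 1 := by omega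
    have e2 : a + 3 - 1 = a + 1 + 1 := by omega
    rw [e1, e2]
    have : (2 * a + 4 + 1).choose (a + 1 + 1) * ((a + 2) * (a + 1) * (a + 3))
       = (2 * a + 3) * ((2*a+5) * (2*a+4) * (2*a+2).choose a) := by
      calc _ = ((2 * a + 4 + 1).choose (a + 1 + 1) * (a + 1 + 1)) * (a + 1) * (a + 3) := by ring
        _ = (2 * a + 5) * ((2*a+3+1).choose (a+1) * (a + 1)) * (a + 3) := by rw [← h1]; ring
        _ = (2*a+5) * (2 * a + 4) * ((2*a+2+1).choose a * (a + 3)) := by rw [← h2]; ring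
        _ = _ := by rw [← h3]; ring
    rw [this]
    have e4 : 2 * (a + 3) - 3 = 2 * a + 3 := by omega
    rw [e4] at hr3
    exact Dvd.dvd.mul_right hr3 _
  have e4 : 2 * (a + 3) - 3 = 2 * a + 3 := by omega
  rw [e4] at hr3
  have one : ¬ r ∣ 1 := hr.one_lt.ne' ∘ Nat.dvd_one.mp
  rcases (hr.dvd_mul.mp key) with h | h
  · exact hch h
  rcases (hr.dvd_mul.mp h) with h | h
  · rcases (hr.dvd_mul.mp h) with h | h
    · apply one
      have := Nat.dvd_sub (Dvd.dvd.mul_left h 2) hr3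
      have e : 2 * (a + 2) - (2 * a + 3) = 1 := by omega
      rwa [e] at this
    · apply one
      have := Nat.dvd_sub hr3 (Dvd.dvd.mul_left h 2)
      have e : (2 * a + 3) - 2 * (a + 1) = 1 := by omega
      rwa [e] at this
  · have := Nat.dvd_sub (Dvd.dvd.mul_left h 2) hr3
    have e : 2 * (a + 3) - (2 * a + 3) = 3 := by omega
    rw [e] at this
    exact hr33 ((Nat.prime_dvd_prime_iff_eq hr Nat.prime_three).mp this)

lemma primitive_of {n : ℕ} (hn : 5 ≤ n) (G : Subgroup (Equiv.Perm (Fin n)))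
    (hD : G.index ∣ numDerangements n) : IsPreprimitive G (Fin n) := by
  have hD' : ∀ p, ¬ p ∣ numDerangements n → ¬ p ∣ G.index := fun p h h' => h (h'.trans hD)
  have ht : IsPretransitive G (Fin n) := by
    apply trans_of_coprime (by omega)
    apply Nat.coprime_of_dvd
    intro p hp h1 h2
    exact hD' p (der_n n p hp (by omega) h1) h2
  refine ⟨fun {B} hB => ?_⟩
  by_contra hnt
  unfold IsTrivialBlock at hnt
  push Not at hnt
  obtain ⟨hns, hnu⟩ := hnt
  have hk : 2 ≤ B.ncard := by
    by_contra hlt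
    have := Set.one_lt_ncard_iff_nontrivial.mpr hns
    omega
  have hne : B.Nonempty := by
    rw [← Set.ncard_pos]; omega
  have hch := choose_dvd_index G B hB hne
  obtain ⟨m, hkm⟩ := hB.ncard_dvd_card hne
  have hpow := fun p hp hpn hG => block_pow G B hB hne p hp hpn hG
  rw [Nat.card_fin] at hkm
  have hm : 2 ≤ m := by
    rcases m with _ | _ | m
    · omega
    · exfalso
      apply hnu
      rw [Set.eq_univ_iff_ncard, Nat.card_fin]
      omega
    · omega
  generalize B.ncard = k at hk hch hkm hpow
  have hk2 : 2 * k ≤ n := by rw [hkm]; nlinarith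
  have hmq : ∀ q, n < q * k → m < q := by
    intro q h
    rw [hkm, mul_comm] at h
    exact lt_of_mul_lt_mul_right h (Nat.zero_le _)
  rcases Nat.even_or_odd n with hev | hodd
  · have h2n : 2 ∣ n := hev.two_dvd
    have hk2e : ∃ e, k ∣ 2 ^ e := by
      rcases hpow 2 Nat.prime_two (by omega) (hD' 2 (der_n n 2 Nat.prime_two (by omega) h2n)) with h | h
      · exact h
      · omega
    obtain ⟨e, he⟩ := hk2e
    have hcop : ∀ p, p.Prime → p ≠ 2 → ¬ ∃ f, k ∣ p ^ f := by
      rintro p hp hp2 ⟨f, hf⟩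
      have hc : Nat.Coprime (2 ^ e) (p ^ f) :=
        Nat.Coprime.pow _ _ ((Nat.coprime_primes Nat.prime_two hp).mpr (Ne.symm hp2))
      have := Nat.eq_one_of_dvd_coprimes hc he hf
      omega
    have hall : ∀ {p}, p.Prime → p ∣ n → p = 2 := by
      intro p hp hpn
      by_contra hp2
      rcases hpow p hp (Nat.le_of_dvd (by omega) hpn) (hD' p (der_n n p hp (by omega) hpn)) with h | h
      · exact hcop p hp hp2 h
      · have hmp := hmq p h
        rw [hkm] at hpn
        rcases hp.dvd_mul.mp hpn with h3 | h3
        · exact hp2 ((Nat.prime_dvd_prime_iff_eq hp Nat.prime_two).mp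
            (hp.dvd_of_dvd_pow (h3.trans he)))
        · have := Nat.le_of_dvd (by omega) h3
          omega
    have hn2 := Nat.eq_prime_pow_of_unique_prime_dvd (by omega) hall
    have h4n : 4 ∣ n := by
      have : 2 ≤ n.primeFactorsList.length := by
        by_contra hlt
        have hl : n.primeFactorsList.length ≤ 1 := by omega
        have := Nat.pow_le_pow_right (show 0 < 2 by norm_num) hl
        omega
      rw [hn2]
      exact pow_dvd_pow 2 this
    obtain ⟨q, hq, hqd⟩ := Nat.exists_prime_and_dvd (show n / 2 - 1 ≠ 1 by omega)
    have hq2 : q ≠ 2 := by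
      rintro rfl
      omega
    have hqn : q ∣ n - 2 := by
      have : n - 2 = 2 * (n / 2 - 1) := by omega
      rw [this]; exact Dvd.dvd.mul_left hqd 2
    have hqG := hD' q (der_n2 n q hq (by omega) hqn)
    have hm2 : m = 2 := by
      rcases hpow q hq ((Nat.le_of_dvd (by omega) hqn).trans (by omega)) hqG with h | h
      · exact absurd h (hcop q hq hq2)
      · exact numeric_q n k m q hq hq2 (by omega) hkm hk hm hqn (hmq q h) (fun h => hqG (h.trans hch))
    subst hm2
    obtain ⟨r, hr, hrd⟩ := Nat.exists_prime_and_dvd (show n - 3 ≠ 1 by omega)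
    have hr2 : r ≠ 2 := by rintro rfl; omega
    have hr3 : r ≠ 3 := by
      rintro rfl
      have := hall Nat.prime_three (by omega)
      omega
    have hrG := hD' r (der_n3 n r hr hr2 (by omega) hrd)
    have hn2k : n = 2 * k := by omega
    rw [hn2k] at hrd
    rw [show n - 1 = 2 * k - 1 by omega] at hch
    exact numeric_r k r hr (by omega) hrd hr3 (fun h => hrG (h.trans hch))
  · obtain ⟨q, hq, hqn⟩ := Nat.exists_prime_and_dvd (show n - 2 ≠ 1 by omega)
    obtain ⟨t, ht⟩ := hodd
    have hq2 : q ≠ 2 := by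
      rintro rfl
      omega
    have hqG := hD' q (der_n2 n q hq (by omega) hqn)
    have hm2 : m = 2 := by
      rcases hpow q hq ((Nat.le_of_dvd (by omega) hqn).trans (by omega)) hqG with ⟨f, h⟩ | h
      · exfalso
        obtain ⟨s, hs, hsk⟩ := Nat.exists_prime_and_dvd (show k ≠ 1 by omega)
        have : s = q := (Nat.prime_dvd_prime_iff_eq hs hq).mp (hs.dvd_of_dvd_pow (hsk.trans h))
        subst this
        have h5 : s ∣ n := hkm ▸ Dvd.dvd.mul_right hsk m
        have h6 := Nat.dvd_sub h5 hqn
        rw [show n - (n - 2) = 2 by omega] at h6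
        exact hq2 ((Nat.prime_dvd_prime_iff_eq hs Nat.prime_two).mp h6)
      · exact numeric_q n k m q hq hq2 (by omega) hkm hk hm hqn (hmq q h) (fun h => hqG (h.trans hch))
    subst hm2
    omega

/-- even case -/
lemma top_of_even {n : ℕ} (hn : 5 ≤ n) (hev : 2 ∣ n) (G : Subgroup (Equiv.Perm (Fin n)))
    (hD : G.index ∣ numDerangements n) : G = ⊤ := by
  have hp := primitive_of hn G hD
  have h2 : ¬ 2 ∣ G.index := fun h => der_n n 2 Nat.prime_two (by omega) hev (h.trans hD)
  obtain ⟨c, hc, hcyc, hcard⟩ := exists_cycle G 2 1 Nat.prime_two h2 le_rfl (by omega)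
  exact Equiv.Perm.subgroup_eq_top_of_isPreprimitive_of_isSwap_mem hp c
    (Equiv.Perm.card_support_eq_two.mp (by simpa using hcard)) hc

/-- multiple transitivity from a prime cycle -/
lemma multi_of_cycle {n : ℕ} (G : Subgroup (Equiv.Perm (Fin n))) (hp : IsPreprimitive G (Fin n))
    (r : ℕ) (hr : r.Prime) (hrn : r < n) (c : Equiv.Perm (Fin n)) (hc : c ∈ G) (hcyc : c.IsCycle)
    (hcard : c.support.card = r) : IsMultiplyPretransitive G (Fin n) (n - r + 1) := by
  have ht := Equiv.Perm.isPretransitive_of_isCycle_mem hcyc hc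
  have hs : ((c.support : Set (Fin n))ᶜ).ncard = n - r := by
    rw [Set.ncard_compl, Set.ncard_coe_finset, hcard, Nat.card_fin]
  have hpr : IsPreprimitive (fixingSubgroup G (c.support : Set (Fin n))ᶜ)
      (SubMulAction.ofFixingSubgroup G (c.support : Set (Fin n))ᶜ) := by
    apply IsPreprimitive.of_prime_card
    have : Nat.card (SubMulAction.ofFixingSubgroup G (c.support : Set (Fin n))ᶜ) = r := by
      change Nat.card (((c.support : Set (Fin n))ᶜ)ᶜ : Set (Fin n)) = r
      rw [compl_compl, Nat.card_coe_set_eq, Set.ncard_coe_finset, hcard]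
    rwa [this]
  have hr2 := hr.two_le
  have := IsPreprimitive.isMultiplyPreprimitive hp (s := (c.support : Set (Fin n))ᶜ) (n := n - r - 1)
    (by rw [hs]; omega) (by rw [Nat.card_fin]; omega) hpr
  have e : n - r - 1 + 2 = n - r + 1 := by omega
  rw [e] at this
  exact this.isMultiplyPretransitive


lemma commutator_three {α : Type*} [Fintype α] [DecidableEq α] (σ τ : Equiv.Perm α) (x : α)
    (hσ : σ x ≠ x) (hτ : τ x ≠ x) (h : ∀ y, σ y ≠ y → τ y ≠ y → y = x) :
    (σ * τ * σ⁻¹ * τ⁻¹).IsThreeCycle := by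
  have hne : τ x ≠ σ x := by
    intro he
    have : σ x = x := h _ (fun h => hσ (σ.injective h)) (by
      rw [← he]; exact fun h => hτ (τ.injective h))
    exact hσ this
  have key : σ * τ * σ⁻¹ * τ⁻¹ = Equiv.swap x (τ x) * Equiv.swap x (σ x) := by
    rw [mul_inv_eq_iff_eq_mul, mul_inv_eq_iff_eq_mul]
    ext y
    simp only [Equiv.Perm.mul_apply, Equiv.swap_apply_def]
    have i1 : ∀ z w, σ z = σ w → z = w := fun z w e => σ.injective e
    have i2 : ∀ z w, τ z = τ w → z = w := fun z w e => τ.injective e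
    have f1 : σ (τ x) = τ x := by
      by_contra hc
      exact hτ (h _ hc (fun e => hτ (i2 _ _ e)))
    have f2 : τ (σ x) = σ x := by
      by_contra hc
      exact hσ (h _ (fun e => hσ (i1 _ _ e)) hc)
    by_cases hyx : y = x
    · subst hyx
      simp [f1, f2, hσ]
    by_cases hs : σ y = y
    · rw [hs]
      by_cases ht : τ y = y
      · rw [ht, hs]
        have a2 : y ≠ σ x := by
          intro e; rw [e] at hs; exact hσ (i1 _ _ hs)
        have a3 : y ≠ τ x := by
          intro e; rw [e] at ht; exact hτ (i2 _ _ ht)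
        simp [hyx, a2, a3]
      · by_cases hx : τ y = x
        · rw [hx]; simp [hσ, Ne.symm hne]
        · have b : σ (τ y) = τ y := by
            by_contra hc
            exact hx (h _ hc (fun e => ht (i2 _ _ e)))
          have b2 : τ y ≠ σ x := by
            intro e; rw [← f2] at e; have := i2 _ _ e; rw [this] at hs
            exact hσ (i1 _ _ hs)
          have b3 : τ y ≠ τ x := fun e => hyx (i2 _ _ e)
          simp [hx, b, b2, i2 y x |>.mt hyx]
    · have ht : τ y = y := by
        by_contra hc
        exact hyx (h _ hs hc)
      rw [ht]
      by_cases hx : σ y = x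
      · rw [hx]; simp [hτ, hne]
      · have b : τ (σ y) = σ y := by
          by_contra hc
          exact hx (h _ (fun e => hs (i1 _ _ e)) hc)
        have b2 : σ y ≠ σ x := fun e => hyx (i1 _ _ e)
        have b3 : σ y ≠ τ x := by
          intro e; rw [← f1] at e; have := i1 _ _ e; rw [this] at ht
          exact hτ (i2 _ _ ht)
        rw [b]
        rw [if_neg hx, if_neg b2, if_neg hx, if_neg b3]
  rw [key]
  exact Equiv.Perm.isThreeCycle_swap_mul_swap_same (Ne.symm hτ) (Ne.symm hσ) hne

lemma alt_le_of_prime {n : ℕ} (G : Subgroup (Equiv.Perm (Fin n))) (hp : IsPreprimitive G (Fin n))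
    (r : ℕ) (hr : r.Prime) (hrn : 2 * r ≤ n + 1) (hn : 3 ≤ n) (hG : ¬ r ∣ G.index) :
    alternatingGroup (Fin n) ≤ G := by
  have hr2 := hr.two_le
  obtain ⟨c, hc, hcyc, hcard⟩ := exists_cycle G r 1 hr hG le_rfl (by rw [pow_one]; omega)
  rw [pow_one] at hcard
  have hm := multi_of_cycle G hp r hr (by omega) c hc hcyc hcard
  have hmr : IsMultiplyPretransitive G (Fin n) r :=
    isMultiplyPretransitive_of_le (n := n - r + 1) (by omega) (by rw [Nat.card_fin]; omega)
  have hps : IsPretransitive G (Set.powersetCard (Fin n) r) := Set.powersetCard.isPretransitive_of_isMultiplyPretransitive _ hmr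
  obtain ⟨x, hx⟩ : c.support.Nonempty := by rw [← Finset.card_pos]; omega
  obtain ⟨T, hT, hTc⟩ := Finset.exists_subset_card_eq (s := c.supportᶜ) (n := r - 1)
    (by rw [Finset.card_compl, Fintype.card_fin]; omega)
  have hxT : x ∉ T := fun h => Finset.mem_compl.mp (hT h) hx
  have hTc' : (insert x T).card = r := by rw [Finset.card_insert_of_notMem hxT]; omega
  obtain ⟨⟨g, hgG⟩, hg⟩ := exists_smul_eq G (Set.powersetCard.ofCard hcard) (Set.powersetCard.ofCard hTc')
  have hg' : g • c.support = insert x T := by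
    have := congrArg (fun s : Set.powersetCard (Fin n) r => (s : Finset (Fin n))) hg
    exact this
  have hsup : (g * c * g⁻¹).support = insert x T := by
    rw [← hg']
    ext y
    rw [Equiv.Perm.mem_support, ← Finset.inv_smul_mem_iff, Equiv.Perm.mem_support]
    simp only [Equiv.Perm.mul_apply, Equiv.Perm.smul_def, ne_eq]
    rw [← Equiv.Perm.eq_inv_iff_eq]
  have h3 : (c * (g * c * g⁻¹) * c⁻¹ * (g * c * g⁻¹)⁻¹).IsThreeCycle := by
    apply commutator_three c _ x (Equiv.Perm.mem_support.mp hx)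
    · rw [← Equiv.Perm.mem_support, hsup]; simp
    · intro y h1 h2
      rw [← Equiv.Perm.mem_support] at h1 h2
      rw [hsup, Finset.mem_insert] at h2
      rcases h2 with h2 | h2
      · exact h2
      · exact absurd h1 (Finset.mem_compl.mp (hT h2))
  have hcg : g * c * g⁻¹ ∈ G := G.mul_mem (G.mul_mem hgG hc) (G.inv_mem hgG)
  exact Equiv.Perm.alternatingGroup_le_of_isPreprimitive_of_isThreeCycle_mem hp h3
    (G.mul_mem (G.mul_mem (G.mul_mem hc hcg) (G.inv_mem hc)) (G.inv_mem hcg))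

lemma pow_eq (b c : ℕ) (h : 2 ^ b = 3 ^ c + 1) : b ≤ 2 := by
  by_contra hb
  obtain ⟨a, rfl⟩ : ∃ a, b = a + 3 := ⟨b - 3, by omega⟩
  have h1 : 2 ^ (a + 3) % 8 = 0 := by rw [pow_add]; omega
  have h2 : 3 ^ c % 8 = 1 ∨ 3 ^ c % 8 = 3 := by
    induction' c with c ih
    · left; rfl
    · clear h h1
      have : 3 ^ c % 8 = 1 ∨ 3 ^ c % 8 = 3 := by
        clear ih
        induction' c with c ih
        · left; rfl
        · rw [pow_succ]; omega
      rw [pow_succ]; omega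
  omega

set_option maxRecDepth 100000 in
lemma seven (G : Subgroup (Equiv.Perm (Fin 7))) 
    (hD : G.index ∣ numDerangements 7) : alternatingGroup (Fin 7) ≤ G := by
  have hp := primitive_of (by norm_num) G hD
  have hD7 : numDerangements 7 = 1854 := by decide
  rw [hD7] at hD
  have h5 : ¬ 5 ∣ G.index := fun h => absurd (h.trans hD) (by norm_num)
  obtain ⟨c, hc, hcyc, hcard⟩ := exists_cycle G 5 1 Nat.prime_five h5 le_rfl (by norm_num)
  have hm : IsMultiplyPretransitive G (Fin 7) 3 :=
    multi_of_cycle G hp 5 Nat.prime_five (by norm_num) c hc hcyc (by simpa using hcard)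
  have hidx := hm.index_of_fixingSubgroup_mul (s := ({0, 1, 2} : Set (Fin 7))) (by
    rw [Set.ncard_eq_toFinset_card']; rfl)
  have h3 : 210 ∣ Nat.card G := by
    have h1 := Subgroup.index_dvd_card (fixingSubgroup G ({0, 1, 2} : Set (Fin 7)))
    simp [Nat.factorial] at hidx
    have : (fixingSubgroup G ({0, 1, 2} : Set (Fin 7))).index = 210 := by omega
    rwa [this] at h1
  have hmul : Nat.card G * G.index = 5040 := by
    rw [Subgroup.card_mul_index, Nat.card_perm, Nat.card_fin]; rfl
  have hle : G.index ∣ 6 := by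
    obtain ⟨t, ht⟩ := h3
    rw [ht] at hmul
    have h24 : G.index ∣ 24 := ⟨t, by
      have : 210 * (t * G.index) = 210 * 24 := by rw [← mul_assoc, hmul]
      have := Nat.eq_of_mul_eq_mul_left (by norm_num) this
      rw [← this, mul_comm]⟩
    have := Nat.dvd_gcd hD h24
    simpa using this
  have h7 : ∀ σ : Equiv.Perm (Fin 7), σ ^ 7 = 1 → σ ∈ G := by
    intro σ hσ
    let f := MulAction.toPermHom (Equiv.Perm (Fin 7)) (Equiv.Perm (Fin 7) ⧸ G)
    have h1 : orderOf (f σ) ∣ 7 := orderOf_dvd_of_pow_eq_one (by rw [← map_pow, hσ, map_one])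
    have h2 : orderOf (f σ) ∣ 720 := by
      refine (orderOf_dvd_natCard (f σ)).trans ?_
      rw [Nat.card_perm]
      change (G.index).factorial ∣ 720
      have : G.index ≤ 6 := Nat.le_of_dvd (by norm_num) hle
      exact Nat.factorial_dvd_factorial this
    have h3 : orderOf (f σ) = 1 := by
      have := Nat.dvd_gcd h1 h2
      simpa using this
    rw [orderOf_eq_one_iff] at h3
    have h4 : f σ ((1 : Equiv.Perm (Fin 7)) : Equiv.Perm (Fin 7) ⧸ G) = ((1 : Equiv.Perm (Fin 7)) : Equiv.Perm (Fin 7) ⧸ G) := by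
      rw [h3]; rfl
    have h5 : ((σ * 1 : Equiv.Perm (Fin 7)) : Equiv.Perm (Fin 7) ⧸ G) = ((1 : Equiv.Perm (Fin 7)) : Equiv.Perm (Fin 7) ⧸ G) := h4
    rw [eq_comm, QuotientGroup.eq] at h5
    simpa using h5
  let a : Equiv.Perm (Fin 7) := finRotate 7
  let t : Equiv.Perm (Fin 7) := Equiv.swap 0 1 * Equiv.swap 0 2
  have ht : t.IsThreeCycle := Equiv.Perm.isThreeCycle_swap_mul_swap_same (by decide) (by decide) (by decide)
  have ha : a ∈ G := h7 a (by decide)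
  have hb : a⁻¹ * t ∈ G ∨ a⁻¹ * t⁻¹ ∈ G := by
    first
    | exact Or.inl (h7 _ (by decide))
    | exact Or.inr (h7 _ (by decide))
  have htG : t ∈ G := by
    rcases hb with h | h
    · simpa using G.mul_mem ha h
    · simpa using G.mul_mem ha h
  exact Equiv.Perm.alternatingGroup_le_of_isPreprimitive_of_isThreeCycle_mem hp ht htG

lemma alt_le_of_odd {n : ℕ} (hn : 5 ≤ n) (hodd : ¬ 2 ∣ n) (G : Subgroup (Equiv.Perm (Fin n)))
    (hD : G.index ∣ numDerangements n) : alternatingGroup (Fin n) ≤ G := by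
  have hp := primitive_of hn G hD
  have hD' : ∀ p, ¬ p ∣ numDerangements n → ¬ p ∣ G.index := fun p h h' => h (h'.trans hD)
  have fin := fun r hr hrn hG => alt_le_of_prime G hp r hr hrn (by omega) hG
  by_cases h0 : 3 ∣ n
  · exact fin 3 Nat.prime_three (by omega) (hD' _ (der_n n 3 Nat.prime_three (by omega) h0))
  by_cases h2 : 3 ∣ n - 2
  · exact fin 3 Nat.prime_three (by omega) (hD' _ (der_n2 n 3 Nat.prime_three (by omega) h2))
  have h41 : n % 3 = 1 := by omega
  have h4 : 3 ∣ n - 4 := by omega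
  by_cases hr : ∃ r, r.Prime ∧ r ≠ 2 ∧ r ∣ n - 3
  · obtain ⟨r, hr, hr2, hrn⟩ := hr
    refine fin r hr ?_ (hD' _ (der_n3 n r hr hr2 (by omega) hrn))
    have hc : Nat.Coprime r 2 := (Nat.coprime_primes hr Nat.prime_two).mpr hr2
    have : r * 2 ∣ n - 3 := hc.mul_dvd_of_dvd_of_dvd hrn (by omega)
    have := Nat.le_of_dvd (by omega) this
    omega
  by_cases hs : ∃ s, s.Prime ∧ s ≠ 3 ∧ s ∣ n - 4
  · obtain ⟨s, hs, hs3, hsn⟩ := hs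
    refine fin s hs ?_ (hD' _ (der_n4 n s hs hs3 (by omega) hsn))
    have hc : Nat.Coprime s 3 := (Nat.coprime_primes hs Nat.prime_three).mpr hs3
    have : s * 3 ∣ n - 4 := hc.mul_dvd_of_dvd_of_dvd hsn h4
    have := Nat.le_of_dvd (by omega) this
    omega
  push Not at hr hs
  have e1 := Nat.eq_prime_pow_of_unique_prime_dvd (p := 2) (n := n - 3) (by omega)
    (fun {d} hd hdn => by by_contra h; exact hr d hd h hdn)
  have e2 := Nat.eq_prime_pow_of_unique_prime_dvd (p := 3) (n := n - 4) (by omega)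
    (fun {d} hd hdn => by by_contra h; exact hs d hd h hdn)
  have hb := pow_eq (n - 3).primeFactorsList.length (n - 4).primeFactorsList.length
    (by rw [← e1, ← e2]; omega)
  have h7 : n ≤ 7 := by
    have := Nat.pow_le_pow_right (show 0 < 2 by norm_num) hb
    omega
  have : n = 7 := by omega
  subst this
  exact seven G hD

lemma card_der_eq (n : ℕ) : (Finset.univ.filter (fun τ : Equiv.Perm (Fin n) => ∀ x, τ x ≠ x)).card = numDerangements n := by
  rw [← card_derangements_fin_eq_numDerangements]
  rw [← Fintype.card_subtype]
  apply Fintype.card_congr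
  exact Equiv.refl _

lemma sum_sign (n : ℕ) : ∑ τ ∈ Finset.univ.filter (fun τ : Equiv.Perm (Fin n) => ∀ x, τ x ≠ x),
    ((Equiv.Perm.sign τ : ℤˣ) : ℤ) = (-1) ^ n * (1 - n) := by
  have h1 : (Matrix.of fun i j : Fin n => if i = j then (0:ℤ) else 1).det = (-1) ^ n * (1 - n) := by
    have : (Matrix.of fun i j : Fin n => if i = j then (0:ℤ) else 1) =
        -(1 - (Matrix.replicateCol Unit (fun _ : Fin n => (1:ℤ))) * (Matrix.replicateRow Unit (fun _ : Fin n => (1:ℤ)))) := by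
      ext i j
      by_cases h : i = j <;> simp [h, Matrix.one_apply, Matrix.mul_apply]
    rw [this, Matrix.det_neg, Matrix.det_one_sub_mul_comm]
    simp [Matrix.mul_apply]
  rw [← h1, Matrix.det_apply, Finset.sum_filter]
  apply Finset.sum_congr rfl
  intro τ _
  split_ifs with h
  · rw [Finset.prod_eq_one]
    · simp [Units.smul_def]
    · intro i _; simp [h i]
  · push Not at h
    obtain ⟨x, hx⟩ := h
    rw [Finset.prod_eq_zero (Finset.mem_univ x)]
    · simp
    · simp [hx]

lemma key_card {n : ℕ} (G : Subgroup (Equiv.Perm (Fin n)))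
    (C : Set (Equiv.Perm (Fin n))) (σ : Equiv.Perm (Fin n))
    (hC : C = {τ : Equiv.Perm (Fin n) | ∃ g ∈ G, τ = σ * g})
    (h : ({σ ∈ C | ∀ x, σ x ≠ x}.ncard : ℚ) / (C.ncard : ℚ)
        = (numDerangements n : ℚ) / (Nat.factorial n : ℚ)) :
    {σ ∈ C | ∀ x, σ x ≠ x}.ncard * G.index = numDerangements n := by
  have h1 : C.ncard = Nat.card G := by
    have : C = (fun g => σ * g) '' (G : Set (Equiv.Perm (Fin n))) := by
      rw [hC]; ext τ
      constructor
      · rintro ⟨g, hg, rfl⟩; exact ⟨g, hg, rfl⟩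
      · rintro ⟨g, hg, rfl⟩; exact ⟨g, hg, rfl⟩
    rw [this, Set.ncard_image_of_injective _ (mul_right_injective σ)]
    rfl
  have h2 : Nat.card G * G.index = n.factorial := by
    rw [Subgroup.card_mul_index, Nat.card_perm, Nat.card_fin]
  have h3 : 0 < Nat.card G := Nat.card_pos
  rw [h1, ← h2] at h
  have h4 : 0 < G.index := Nat.pos_of_ne_zero (by intro h0; rw [h0] at h2; have := n.factorial_pos; omega)
  rw [div_eq_div_iff (by positivity) (by positivity)] at h
  have : (({σ ∈ C | ∀ x, σ x ≠ x}.ncard * (Nat.card G * G.index) : ℕ) : ℚ) = ((numDerangements n * Nat.card G : ℕ) : ℚ) := by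
    push_cast; push_cast at h; exact h
  have := Nat.cast_injective this
  apply Nat.eq_of_mul_eq_mul_left h3
  linarith

lemma top_of_alt {n : ℕ} (hn : 2 ≤ n) (G : Subgroup (Equiv.Perm (Fin n)))
    (C : Set (Equiv.Perm (Fin n))) (σ : Equiv.Perm (Fin n))
    (hC : C = {τ : Equiv.Perm (Fin n) | ∃ g ∈ G, τ = σ * g})
    (h : {σ ∈ C | ∀ x, σ x ≠ x}.ncard * G.index = numDerangements n)
    (hA : alternatingGroup (Fin n) ≤ G) : G = ⊤ := by
  by_contra hG
  have : Nontrivial (Fin n) := Fin.nontrivial_iff_two_le.mpr hn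
  have hGA : G = alternatingGroup (Fin n) := by
    apply le_antisymm _ hA
    intro g hg
    rw [Equiv.Perm.mem_alternatingGroup]
    by_contra hs
    apply hG
    rw [eq_top_iff]
    intro t _
    by_cases ht : Equiv.Perm.sign t = 1
    · exact hA (Equiv.Perm.mem_alternatingGroup.mpr ht)
    · have : t * g⁻¹ ∈ G := by
        apply hA
        rw [Equiv.Perm.mem_alternatingGroup, map_mul, map_inv, (Int.units_eq_one_or _).resolve_left ht, (Int.units_eq_one_or _).resolve_left hs]
        rfl
      simpa using G.mul_mem this hg
  subst hGA
  rw [alternatingGroup.index_eq_two] at h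
  have hset : {σ ∈ C | ∀ x, σ x ≠ x} = ↑((Finset.univ.filter (fun τ : Equiv.Perm (Fin n) => ∀ x, τ x ≠ x)).filter (fun τ => Equiv.Perm.sign τ = Equiv.Perm.sign σ)) := by
    ext τ
    simp only [hC, Set.mem_ofPred_eq, Finset.coe_filter, Finset.mem_filter, Finset.mem_univ, true_and]
    rw [and_comm]
    apply and_congr_right
    intro _
    constructor
    · rintro ⟨g, hg, rfl⟩
      rw [map_mul, Equiv.Perm.mem_alternatingGroup.mp hg, mul_one]
    · intro e
      exact ⟨σ⁻¹ * τ, by rw [Equiv.Perm.mem_alternatingGroup, map_mul, map_inv, e, inv_mul_cancel], by group⟩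
  rw [hset, Set.ncard_coe_finset, ← card_der_eq] at h
  have hs := sum_sign n
  set F := Finset.univ.filter (fun τ : Equiv.Perm (Fin n) => ∀ x, τ x ≠ x) with hF
  have hsum : ∑ τ ∈ F, ((Equiv.Perm.sign τ : ℤˣ) : ℤ) = 0 := by
    have hc := Finset.card_filter_add_card_filter_not (s := F) (fun τ => Equiv.Perm.sign τ = Equiv.Perm.sign σ)
    rw [← Finset.sum_filter_add_sum_filter_not F (fun τ => Equiv.Perm.sign τ = Equiv.Perm.sign σ)]
    rw [Finset.sum_congr rfl (g := fun _ => ((Equiv.Perm.sign σ : ℤˣ) : ℤ)) (s₂ := F.filter (fun τ => Equiv.Perm.sign τ = Equiv.Perm.sign σ))]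
    · rw [Finset.sum_congr rfl (g := fun _ => -((Equiv.Perm.sign σ : ℤˣ) : ℤ)) (s₂ := F.filter (fun τ => ¬ Equiv.Perm.sign τ = Equiv.Perm.sign σ))]
      · rw [Finset.sum_const, Finset.sum_const]
        have : (F.filter (fun τ => Equiv.Perm.sign τ = Equiv.Perm.sign σ)).card = (F.filter (fun τ => ¬ Equiv.Perm.sign τ = Equiv.Perm.sign σ)).card := by omega
        rw [this]; simp
      · intro τ hτ
        have := (Finset.mem_filter.mp hτ).2
        rcases Int.units_eq_one_or (Equiv.Perm.sign τ) with h1 | h1 <;>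
        rcases Int.units_eq_one_or (Equiv.Perm.sign σ) with h2 | h2 <;> simp_all
    · intro τ hτ
      rw [(Finset.mem_filter.mp hτ).2]
  rw [hsum] at hs
  have : (1 - (n:ℤ)) = 0 := by
    rcases mul_eq_zero.mp hs.symm with h | h
    · exact absurd h (pow_ne_zero _ (by norm_num))
    · exact h
  omega

def zz : Equiv.Perm (Fin 4) := Equiv.swap 0 2 * Equiv.swap 1 3

set_option maxRecDepth 100000 in
lemma zz_card : (Finset.univ.filter (fun h : Equiv.Perm (Fin 4) => h * zz = zz * h)).card = 8 := by
  decide +kernel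

set_option maxRecDepth 100000 in
lemma zz_count : ∀ u : Equiv.Perm (Fin 4), (Finset.univ.filter (fun r : Equiv.Perm (Fin 4) =>
    (u⁻¹ * r) * zz = zz * (u⁻¹ * r) ∧ ∀ x, r x ≠ x)).card ≠ 3 := by
  decide +kernel

lemma four (G : Subgroup (Equiv.Perm (Fin 4)))
    (C : Set (Equiv.Perm (Fin 4))) (σ : Equiv.Perm (Fin 4))
    (hC : C = {τ : Equiv.Perm (Fin 4) | ∃ g ∈ G, τ = σ * g})
    (h : {σ ∈ C | ∀ x, σ x ≠ x}.ncard * G.index = numDerangements 4) : G = ⊤ := by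
  have hD : numDerangements 4 = 9 := by decide
  rw [hD] at h
  have h2 : Nat.card G * G.index = 24 := by
    rw [Subgroup.card_mul_index, Nat.card_perm, Nat.card_fin]; rfl
  have h3 : G.index ∣ 3 := by
    have := Nat.dvd_gcd (Dvd.intro_left _ h) (Dvd.intro_left _ h2)
    norm_num at this; exact this
  rcases (Nat.dvd_prime Nat.prime_three).mp h3 with h1 | h1
  · exact Subgroup.index_eq_one.mp h1
  exfalso
  rw [h1] at h h2
  have hcG : Nat.card G = 8 := by omega
  let H : Subgroup (Equiv.Perm (Fin 4)) := Subgroup.centralizer {zz}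
  have hmem : ∀ r, r ∈ H ↔ r * zz = zz * r := by
    intro r
    simp only [H, Subgroup.mem_centralizer_singleton_iff]
  have hcH : Nat.card H = 8 := by
    rw [← zz_card, ← Set.ncard_coe_finset, ← Nat.card_coe_set_eq]
    apply Nat.card_congr
    apply Equiv.subtypeEquivRight
    intro r
    simp [hmem]
  obtain ⟨g, hg⟩ := exists_conj_mem G H 2 Nat.prime_two (by rw [h1]; norm_num)
    (IsPGroup.of_card (n := 3) (by rw [hcH]; norm_num))
  let H' := H.map (MulAut.conj g⁻¹).toMonoidHom
  have hle : H' ≤ G := by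
    rintro _ ⟨r, hr, rfl⟩
    simpa using hg r hr
  have hcH' : Nat.card H' = 8 := by
    rw [← hcH]
    exact Subgroup.card_map_of_injective (MulAut.conj g⁻¹).injective
  have heq : H' = G := Subgroup.eq_of_le_of_card_ge hle (by omega)
  have hmG : ∀ t, t ∈ G ↔ g * t * g⁻¹ ∈ H := by
    intro t
    constructor
    · intro ht
      rw [← heq] at ht
      obtain ⟨r, hr, rfl⟩ := ht
      have : g * ((MulAut.conj g⁻¹).toMonoidHom r) * g⁻¹ = r := by
        simp; group
      rw [this]; exact hr
    · intro ht
      have := hg _ ht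
      have e : g⁻¹ * (g * t * g⁻¹) * g = t := by group
      rwa [e] at this
  apply zz_count (g * σ * g⁻¹)
  have hn3 : {σ ∈ C | ∀ x, σ x ≠ x}.ncard = 3 := by omega
  rw [← hn3, ← Set.ncard_coe_finset]
  symm
  rw [← Set.ncard_image_of_injective _ (MulAut.conj g).injective]
  congr 1
  ext r
  rw [hC]
  simp only [Finset.coe_filter, Finset.mem_univ, true_and]
  constructor
  · rintro ⟨t, ⟨⟨k, hk, rfl⟩, ht⟩, rfl⟩
    refine ⟨?_, ?_⟩
    · rw [← hmem]
      have e : (g * σ * g⁻¹)⁻¹ * (MulAut.conj g) (σ * k) = g * k * g⁻¹ := by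
        rw [MulAut.conj_apply]; group
      rw [e]; exact (hmG k).mp hk
    · intro x hx
      apply ht (g⁻¹ x)
      rw [MulAut.conj_apply, Equiv.Perm.mul_apply, Equiv.Perm.mul_apply] at hx
      rw [Equiv.Perm.eq_inv_iff_eq]; exact hx
  · rintro ⟨h1, h2⟩
    rw [← hmem] at h1
    refine ⟨g⁻¹ * r * g, ⟨⟨σ⁻¹ * (g⁻¹ * r * g), ?_, by group⟩, ?_⟩, ?_⟩
    · rw [hmG]
      have e : g * (σ⁻¹ * (g⁻¹ * r * g)) * g⁻¹ = (g * σ * g⁻¹)⁻¹ * r := by group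
      rw [e]; exact h1
    · intro x hx
      apply h2 (g x)
      rw [Equiv.Perm.mul_apply, Equiv.Perm.mul_apply, Equiv.Perm.inv_eq_iff_eq] at hx
      exact hx
    · rw [MulAut.conj_apply]; group

end Helpers

theorem derangement_proportion_characterizes_symmetric
    (n : ℕ) (hn : 1 ≤ n) (G : Subgroup (Equiv.Perm (Fin n)))
    (C : Set (Equiv.Perm (Fin n)))
    (hC : ∃ σ : Equiv.Perm (Fin n), C = {τ : Equiv.Perm (Fin n) | ∃ g ∈ G, τ = σ * g})
    (h : ({σ ∈ C | ∀ x, σ x ≠ x}.ncard : ℚ) / (C.ncard : ℚ)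
        = (numDerangements n : ℚ) / (Nat.factorial n : ℚ)) :
    G = ⊤ ∧ C = Set.univ := by
  obtain ⟨σ, hC⟩ := hC
  have key := key_card G C σ hC h
  have hD : G.index ∣ numDerangements n := Dvd.intro_left _ key
  have hG : G = ⊤ := by
    by_cases h5 : 5 ≤ n
    · by_cases hev : 2 ∣ n
      · exact top_of_even h5 hev G hD
      · exact top_of_alt (by omega) G C σ hC key (alt_le_of_odd h5 hev G hD)
    · have : n = 1 ∨ n = 2 ∨ n = 3 ∨ n = 4 := by omega
      rcases this with rfl | rfl | rfl | rfl
      · exact Subsingleton.elim _ _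
      · have e : numDerangements 2 = 1 := by decide
        rw [e] at hD
        exact Subgroup.index_eq_one.mp (Nat.dvd_one.mp hD)
      · have e : numDerangements 3 = 2 := by decide
        apply top_of_alt (by omega) G C σ hC key
        rw [e] at hD
        exact Equiv.Perm.alternatingGroup_le_of_index_le_two (Nat.le_of_dvd (by norm_num) hD)
      · exact four G C σ hC key
  refine ⟨hG, ?_⟩
  rw [hC, hG]
  ext τ
  simp only [Set.mem_univ, iff_true]
  exact ⟨σ⁻¹ * τ, Subgroup.mem_top _, by group⟩
end

section
/- Let n ≥ 5 and let G be a subgroup of the symmetric group S_n. If the denominator of the rational number D_n / n! in lowest terms divides |G|, then G = A_n or G = S_n. -/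
open MulAction Equiv Equiv.Perm
open scoped Pointwise

/-- If a `p`-element `c` of `K` is given and `p` does not divide the index of `G`,
then some conjugate of `c` lies in `G`. -/
lemma exists_conj_mem_s2 {K : Type*} [Group K] (G : Subgroup K) {p : ℕ} (hp : p.Prime)
    (hi : ¬ p ∣ G.index) (c : K) (hc : orderOf c = p) : ∃ s : K, s⁻¹ * c * s ∈ G := by
  have := Fact.mk hp
  have hP : IsPGroup p (Subgroup.zpowers c) := by
    apply IsPGroup.of_card (n := 1)
    rw [Nat.card_zpowers, hc, pow_one]
  obtain ⟨q, hq⟩ := hP.nonempty_fixed_point_of_prime_not_dvd_card (K ⧸ G) hi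
  obtain ⟨s, rfl⟩ := QuotientGroup.mk_surjective q
  have := hq ⟨c, Subgroup.mem_zpowers c⟩
  refine ⟨s, ?_⟩
  have h2 : ((c * s : K) : K ⧸ G) = (s : K ⧸ G) := this
  rw [eq_comm, QuotientGroup.eq] at h2
  simpa [mul_assoc] using h2

lemma exists_cycle_mem {n : ℕ} (G : Subgroup (Perm (Fin n))) {p : ℕ} (hp : p.Prime)
    (hpn : p ≤ n) (hi : ¬ p ∣ G.index) :
    ∃ g ∈ G, g.IsCycle ∧ g.support.card = p := by
  obtain ⟨c, hc⟩ : ∃ c : Perm (Fin n), c.cycleType = {p} := by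
    rw [Equiv.Perm.exists_with_cycleType_iff]
    simp [hpn, hp.two_le]
  have hcc : c.IsCycle := by
    rw [← card_cycleType_eq_one, hc]; simp
  have hcs : c.support.card = p := by
    rw [← sum_cycleType, hc]; simp
  obtain ⟨s, hs⟩ := exists_conj_mem_s2 G hp hi c (by rw [hcc.orderOf, hcs])
  refine ⟨_, hs, ?_, ?_⟩
  · have := hcc.conj (g := s⁻¹)
    simpa using this
  · have := card_support_conj (σ := s⁻¹) (τ := c)
    rw [← hcs]
    simpa using this

lemma jordan_aux {n : ℕ} {G : Subgroup (Perm (Fin n))} (hG : IsPreprimitive G (Fin n))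
    {p m : ℕ} (hp : p.Prime) (hm : n = p + (m + 1)) {g : Perm (Fin n)} (hgc : g.IsCycle)
    (hgp : g.support.card = p) (hg : g ∈ G) :
    IsMultiplyPretransitive G (Fin n) (m + 2) := by
  classical
  suffices IsMultiplyPreprimitive G (Fin n) (m + 2) from
    IsMultiplyPreprimitive.isMultiplyPretransitive ..
  apply hG.isMultiplyPreprimitive (s := (g.supportᶜ : Set (Fin n)))
  · apply Nat.add_left_cancel
    rw [Set.ncard_add_ncard_compl, Set.ncard_coe_finset, hgp, Nat.card_fin]
    exact hm
  · have := hp.two_le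
    rw [Nat.card_fin]; omega
  have := isPretransitive_of_isCycle_mem hgc hg
  apply IsPreprimitive.of_prime_card
  convert! hp
  rw [Nat.card_eq_fintype_card, Fintype.card_subtype, ← hgp]
  apply congr_arg
  ext x
  simp [SubMulAction.mem_ofFixingSubgroup_iff]

/-- An element of `G` acting as a prescribed permutation on the fixed points of `g`. -/
lemma exists_act {n : ℕ} {G : Subgroup (Perm (Fin n))} {g : Perm (Fin n)} {m : ℕ}
    (hn : n = g.support.card + (m + 1))
    (ht : IsMultiplyPretransitive G (Fin n) (m + 1)) (τ : Perm (Fin n)) :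
    ∃ h ∈ G, ∀ d, g d = d → h d = τ d := by
  have hcard : (g.supportᶜ).card = m + 1 := by
    rw [Finset.card_compl, Fintype.card_fin]; omega
  let e : Fin (m + 1) ↪ Fin n := ((g.supportᶜ).orderEmbOfFin hcard).toEmbedding
  rw [isMultiplyPretransitive_iff] at ht
  obtain ⟨h, hh⟩ := ht e (e.trans τ.toEmbedding)
  refine ⟨h, h.2, fun d hd => ?_⟩
  have : d ∈ Set.range ((g.supportᶜ).orderEmbOfFin hcard) := by
    rw [Finset.range_orderEmbOfFin]; simpa using hd
  obtain ⟨i, rfl⟩ := this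
  have := DFunLike.congr_fun hh i
  exact this

lemma exists_act_normalize {n : ℕ} {G : Subgroup (Perm (Fin n))} {g : Perm (Fin n)} {m : ℕ}
    (hp : g.support.card.Prime) (hgc : g.IsCycle) (hg : g ∈ G)
    (hn : n = g.support.card + (m + 1))
    (ht : IsMultiplyPretransitive G (Fin n) (m + 1)) {x y : Fin n} (hx : g x = x) (hy : g y = y) :
    ∃ k ∈ G, (∀ d, g d = d → k d = swap x y d) ∧ ∃ i : ℤ, k * g * k⁻¹ = g ^ i := by
  obtain ⟨h, hhG, hh⟩ := exists_act hn ht (swap x y)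
  have hτ : ∀ d, g d = d → g (swap x y d) = swap x y d := by
    intro d hd
    rw [swap_apply_def]; split_ifs <;> assumption
  have hinv : ∀ d, g d = d → h⁻¹ d = swap x y d := by
    intro d hd
    rw [Perm.inv_eq_iff_eq, hh _ (hτ d hd)]; simp
  let R : Subgroup (Perm (Fin n)) := (ofSubtype : Perm {x // x ∈ g.support} →* Perm (Fin n)).range
  have hR : ∀ σ, σ ∈ R ↔ ∀ d, g d = d → σ d = d := by
    intro σ
    simp only [R, mem_range_ofSubtype_iff]
    constructor
    · intro h d hd
      by_contra hne
      have := h (mem_support.2 hne)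
      exact (mem_support.1 this) hd
    · intro h d hd
      by_contra hne
      have h1 : ¬ d ∈ g.support := hne
      exact (mem_support.1 hd) (h d (by simpa using h1))
  let H : Subgroup (Perm (Fin n)) := G ⊓ R
  have hcardR : Nat.card R = (g.support.card).factorial := by
    rw [← Nat.card_congr (MonoidHom.ofInjective (ofSubtype_injective
      (p := fun x => x ∈ g.support))).toEquiv, Nat.card_perm, Nat.card_eq_fintype_card,
      Fintype.card_coe]
  have hgH : g ∈ H := ⟨hg, (hR g).2 fun d hd => hd⟩
  have hg' : h * g * h⁻¹ ∈ H := by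
    refine ⟨G.mul_mem (G.mul_mem hhG hg) (G.inv_mem hhG), (hR _).2 fun d hd => ?_⟩
    simp only [Perm.mul_apply]
    rw [hinv d hd, hτ d hd, hh _ (hτ d hd)]; simp
  let g1 : H := ⟨g, hgH⟩
  let g2 : H := ⟨h * g * h⁻¹, hg'⟩
  have ho1 : orderOf g1 = g.support.card := by
    rw [← hgc.orderOf]; exact Subgroup.orderOf_mk _ _
  have ho2 : orderOf g2 = g.support.card := by
    have : orderOf g2 = orderOf (h * g * h⁻¹) := Subgroup.orderOf_mk _ _
    rw [this, (hgc.conj (g := h)).orderOf, card_support_conj]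
  have hidx : ¬ g.support.card ∣ (Subgroup.zpowers g2).index := by
    intro hd
    have h1 := (Subgroup.zpowers g2).index_mul_card
    rw [Nat.card_zpowers, ho2] at h1
    have h2 : Nat.card H ∣ (g.support.card).factorial := by
      rw [← hcardR]; exact Subgroup.card_dvd_of_le inf_le_right
    rw [← h1, ← Nat.mul_factorial_pred hp.ne_zero, mul_comm] at h2
    have h3 := Nat.dvd_of_mul_dvd_mul_left hp.pos h2
    have h4 := (hp.dvd_factorial).1 (hd.trans h3)
    have := hp.pos
    omega
  obtain ⟨s, hs⟩ := exists_conj_mem_s2 (Subgroup.zpowers g2) hp hidx g1 ho1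
  obtain ⟨i, hi⟩ := Subgroup.mem_zpowers_iff.1 hs
  have hi' : (h * g * h⁻¹) ^ i = (s : Perm (Fin n))⁻¹ * g * s := by
    have := congrArg (Subtype.val) hi
    simpa [g1, g2] using this
  refine ⟨h⁻¹ * (s : Perm (Fin n))⁻¹, mul_mem (inv_mem hhG) (inv_mem s.2.1), ?_, i, ?_⟩
  · intro d hd
    have : (s : Perm (Fin n))⁻¹ d = d := (hR _).1 (inv_mem s.2.2) d hd
    rw [Perm.mul_apply, this, hinv d hd]
  · rw [conj_zpow] at hi'
    have : g ^ i = h⁻¹ * ((s : Perm (Fin n))⁻¹ * g * s) * h := by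
      rw [← hi']; group
    rw [this]; group

theorem jordan_prime_cycle {n : ℕ} {G : Subgroup (Perm (Fin n))} (hG : IsPreprimitive G (Fin n))
    {p : ℕ} (hp : p.Prime) (hpn : p + 3 ≤ n) {g : Perm (Fin n)} (hgc : g.IsCycle)
    (hgp : g.support.card = p) (hg : g ∈ G) : alternatingGroup (Fin n) ≤ G := by
  obtain ⟨m, hm⟩ : ∃ m, n = p + (m + 1) := ⟨n - p - 1, by omega⟩
  have ht2 := jordan_aux hG hp hm hgc hgp hg
  have ht : IsMultiplyPretransitive G (Fin n) (m + 1) :=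
    isMultiplyPretransitive_of_le (n := m + 2) (by omega)
      (by rw [Nat.card_fin]; have := hp.two_le; omega)
  subst hgp
  have hcard : 2 < (g.supportᶜ).card := by
    rw [Finset.card_compl, Fintype.card_fin]; omega
  obtain ⟨x, y, z, hx, hy, hz, hxy, hxz, hyz⟩ := Finset.two_lt_card_iff.1 hcard
  have hx : g x = x := by simpa using hx
  have hy : g y = y := by simpa using hy
  have hz : g z = z := by simpa using hz
  obtain ⟨a, haG, ha, i, hi⟩ := exists_act_normalize hp hgc hg hm ht hx hy
  obtain ⟨b, hbG, hb, j, hj⟩ := exists_act_normalize hp hgc hg hm ht hx hz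
  have e1 : (a * b) * g * (a * b)⁻¹ = g ^ (i * j) := by
    calc (a * b) * g * (a * b)⁻¹ = a * (b * g * b⁻¹) * a⁻¹ := by group
      _ = (a * g * a⁻¹) ^ j := by rw [hj, conj_zpow]
      _ = _ := by rw [hi, ← zpow_mul]
  have e2 : (b * a) * g * (b * a)⁻¹ = g ^ (i * j) := by
    calc (b * a) * g * (b * a)⁻¹ = b * (a * g * a⁻¹) * b⁻¹ := by group
      _ = (b * g * b⁻¹) ^ i := by rw [hi, conj_zpow]
      _ = _ := by rw [hj, ← zpow_mul, mul_comm]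
  let c := (b * a)⁻¹ * (a * b)
  have hcG : c ∈ G := mul_mem (inv_mem (mul_mem hbG haG)) (mul_mem haG hbG)
  have hcg : c * g = g * c := by
    have : (a * b) * g * (a * b)⁻¹ = (b * a) * g * (b * a)⁻¹ := e1.trans e2.symm
    have h3 : (b * a)⁻¹ * ((a * b) * g * (a * b)⁻¹) * (a * b)
        = (b * a)⁻¹ * ((b * a) * g * (b * a)⁻¹) * (a * b) := by rw [this]
    simp only [c]
    calc _ = (b * a)⁻¹ * ((a * b) * g * (a * b)⁻¹) * (a * b) := by group
      _ = _ := h3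
      _ = _ := by group
  let τ : Perm (Fin n) := (swap x z * swap x y)⁻¹ * (swap x y * swap x z)
  have hsw : ∀ u v, g u = u → g v = v → ∀ d, g d = d → g (swap u v d) = swap u v d := by
    intro u v hu hv d hd
    rw [swap_apply_def]; split_ifs <;> assumption
  have hbi : ∀ d, g d = d → b⁻¹ d = swap x z d := by
    intro d hd
    rw [Perm.inv_eq_iff_eq, hb _ (hsw _ _ hx hz d hd)]; simp
  have hai : ∀ d, g d = d → a⁻¹ d = swap x y d := by
    intro d hd
    rw [Perm.inv_eq_iff_eq, ha _ (hsw _ _ hx hy d hd)]; simp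
  have hcτ : ∀ d, g d = d → c d = τ d := by
    intro d hd
    have k1 := hsw _ _ hx hz d hd
    have k2 := hsw _ _ hx hy _ k1
    have k3 := hsw _ _ hx hz _ k2
    simp only [c, τ, mul_inv_rev, Perm.mul_apply, swap_inv]
    rw [hb d hd, ha _ k1, hbi _ k2, hai _ k3]
  obtain ⟨w, hw, hwc⟩ := id hgc
  have hcw : g (c w) ≠ c w := by
    intro h
    have : c (g w) = c w := by rw [← Perm.mul_apply, hcg]; exact h
    exact hw (c.injective this)
  obtain ⟨l, hl⟩ := hgc.exists_zpow_eq hw hcw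
  have hcl : ∀ d, g d ≠ d → c d = (g ^ l) d := by
    intro d hd
    obtain ⟨q, rfl⟩ := hgc.exists_zpow_eq hw hd
    have hcomm : Commute c (g ^ q) := (show Commute c g from hcg).zpow_right q
    rw [← Perm.mul_apply, hcomm.eq, Perm.mul_apply, ← hl, ← Perm.mul_apply, ← Perm.mul_apply,
      ← zpow_add, ← zpow_add, add_comm]
  have hfin : (g ^ l)⁻¹ * c = τ := by
    ext1 d
    by_cases hd : g d = d
    · have hτd : g (τ d) = τ d := by
        simp only [τ, mul_inv_rev, Perm.mul_apply, swap_inv]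
        exact hsw _ _ hx hy _ (hsw _ _ hx hz _ (hsw _ _ hx hy _ (hsw _ _ hx hz _ hd)))
      rw [Perm.mul_apply, hcτ d hd, Perm.inv_eq_iff_eq]
      exact (zpow_apply_eq_self_of_apply_eq_self hτd l).symm
    · have n1 : d ≠ x := fun h => hd (h ▸ hx)
      have n2 : d ≠ y := fun h => hd (h ▸ hy)
      have n3 : d ≠ z := fun h => hd (h ▸ hz)
      rw [Perm.mul_apply, hcl d hd, show (g ^ l)⁻¹ ((g ^ l) d) = d by simp]
      simp [τ, swap_apply_of_ne_of_ne, n1, n2, n3]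
  have h3 : τ.IsThreeCycle := by
    have h0 : (swap x y * swap x z).IsThreeCycle := isThreeCycle_swap_mul_swap_same hxy hxz hyz
    have : τ = (swap x y * swap x z) * (swap x y * swap x z) := by
      simp [τ, mul_assoc]
    rw [this]
    exact h0.isThreeCycle_sq
  apply alternatingGroup_le_of_isPreprimitive_of_isThreeCycle_mem hG h3
  rw [← hfin]
  exact mul_mem (inv_mem (zpow_mem hg l)) hcG

lemma choose_dvd_index_s2 {n : ℕ} (H : Subgroup (Perm (Fin n))) (B : Set (Fin n))
    (hB : ∀ h ∈ H, h • B = B) : n.choose B.ncard ∣ H.index := by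
  classical
  let s : Set.powersetCard (Fin n) B.ncard := ⟨B.toFinite.toFinset, by
    rw [Set.powersetCard.mem_iff, Set.ncard_eq_toFinset_card B]⟩
  have hs : ((s : Finset (Fin n)) : Set (Fin n)) = B := by simp [s]
  have htr : IsPretransitive (Perm (Fin n)) (Set.powersetCard (Fin n) B.ncard) :=
    Set.powersetCard.isPretransitive
  have h1 := index_stabilizer_of_transitive (Perm (Fin n)) s
  rw [Set.powersetCard.card, Nat.card_fin] at h1
  rw [← h1]
  apply Subgroup.index_dvd_of_le
  intro h hh
  rw [Set.powersetCard.stabilizer_coe, mem_stabilizer_iff]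
  have := hB h hh
  rw [← hs] at this
  exact this

lemma choose_dvd_index_block {n : ℕ} (G : Subgroup (Perm (Fin n))) (B : Set (Fin n)) :
    n.choose B.ncard ∣ (orbit G B).ncard * G.index := by
  rw [← index_stabilizer, ← Subgroup.index_map_subtype]
  apply choose_dvd_index_s2
  rintro h ⟨k, hk, rfl⟩
  exact hk

lemma derange_all (m : ℕ) : ∃ (e : ℤ), (e = 1 ∨ e = -1) ∧
    (m : ℤ) ∣ numDerangements m - e ∧ (m : ℤ) ∣ numDerangements (m + 2) - e ∧
    (m : ℤ) ∣ numDerangements (m + 3) - 2 * e ∧ (m : ℤ) ∣ numDerangements (m + 4) - 9 * e := by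
  refine ⟨(-1) ^ m, neg_one_pow_eq_or ℤ m, ?_⟩
  have h1 := numDerangements_succ m
  have h2 := numDerangements_succ (m + 1)
  have h3 := numDerangements_succ (m + 2)
  have h4 := numDerangements_succ (m + 3)
  have h0 : (m : ℤ) ∣ numDerangements m - (-1) ^ m := by
    cases m with
    | zero => simp
    | succ k =>
      rw [numDerangements_succ]
      exact ⟨numDerangements k, by push_cast; ring⟩
  obtain ⟨t, ht⟩ := h0
  have ht' : (numDerangements m : ℤ) = (-1) ^ m + m * t := by linarith
  rw [ht'] at h1
  push_cast at h1 h2 h3 h4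
  rw [h1] at h2
  rw [h2] at h3
  rw [h3] at h4
  simp only [pow_succ] at h2 h3 h4
  refine ⟨⟨t, ht⟩, ?_, ?_, ?_⟩
  · rw [h2]
    generalize (-1 : ℤ) ^ m = e
    have : ∀ M : ℤ, M ∣ (M + 1 + 1) * ((M + 1) * (e + M * t) - e) - e * -1 - e := by
      intro M; exact ⟨(M + 2) * (e + (M + 1) * t), by ring⟩
    exact this m
  · rw [h3]
    generalize (-1 : ℤ) ^ m = e
    have : ∀ M : ℤ, M ∣ (M + 2 + 1) * ((M + 1 + 1) * ((M + 1) * (e + M * t) - e) - e * -1)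
        - e * -1 * -1 - 2 * e := by
      intro M
      exact ⟨e + (M + 3) * ((M + 2) * (e + (M + 1) * t)), by ring⟩
    exact this m
  · rw [h4]
    generalize (-1 : ℤ) ^ m = e
    have : ∀ M : ℤ, M ∣ (M + 3 + 1) * ((M + 2 + 1) * ((M + 1 + 1) * ((M + 1) * (e + M * t) - e)
        - e * -1) - e * -1 * -1) - e * -1 * -1 * -1 - 9 * e := by
      intro M
      exact ⟨2 * e + (M + 4) * (e + (M + 3) * ((M + 2) * (e + (M + 1) * t))), by ring⟩
    exact this m

lemma prime_not_dvd_aux {p m c N : ℕ} {e : ℤ} (he : e = 1 ∨ e = -1) (hpm : p ∣ m)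
    (h : (m : ℤ) ∣ N - c * e) (hpN : p ∣ N) : p ∣ c := by
  have h1 : (p : ℤ) ∣ N - c * e := (Int.natCast_dvd_natCast.2 hpm).trans h
  have h2 : (p : ℤ) ∣ c * e := by
    have := dvd_sub (Int.natCast_dvd_natCast.2 hpN) h1
    simpa using this
  have h3 : (p : ℤ) ∣ c := by
    rcases he with rfl | rfl
    · simpa using h2
    · simpa using h2
  exact_mod_cast h3

lemma not_dvd_D0 {p n : ℕ} (hp : p.Prime) (h : p ∣ n) : ¬ p ∣ numDerangements n := by
  obtain ⟨e, he, h0, -⟩ := derange_all n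
  intro hd
  exact hp.one_lt.ne' (Nat.dvd_one.1 (prime_not_dvd_aux (c := 1) he h (by simpa using h0) hd))

lemma not_dvd_D2 {p m : ℕ} (hp : p.Prime) (h : p ∣ m) : ¬ p ∣ numDerangements (m + 2) := by
  obtain ⟨e, he, -, h0, -⟩ := derange_all m
  intro hd
  exact hp.one_lt.ne' (Nat.dvd_one.1 (prime_not_dvd_aux (c := 1) he h (by simpa using h0) hd))

lemma not_dvd_D3 {p m : ℕ} (hp : p.Prime) (h : p ∣ m) (h2 : p ≠ 2) :
    ¬ p ∣ numDerangements (m + 3) := by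
  obtain ⟨e, he, -, -, h0, -⟩ := derange_all m
  intro hd
  exact h2 ((Nat.prime_dvd_prime_iff_eq hp Nat.prime_two).1
    (prime_not_dvd_aux (c := 2) he h (by simpa using h0) hd))

lemma not_dvd_D4 {p m : ℕ} (hp : p.Prime) (h : p ∣ m) (h2 : p ≠ 3) :
    ¬ p ∣ numDerangements (m + 4) := by
  obtain ⟨e, he, -, -, -, h0⟩ := derange_all m
  intro hd
  have h9 := prime_not_dvd_aux (c := 9) he h (by simpa using h0) hd
  rw [show 9 = 3 ^ 2 by norm_num] at h9
  exact h2 ((Nat.prime_dvd_prime_iff_eq hp Nat.prime_three).1 (hp.dvd_of_dvd_pow h9))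

lemma coprime_of_primes {i m N : ℕ} (hi : i ∣ N) (h : ∀ p, p.Prime → p ∣ m → ¬ p ∣ N) :
    Nat.Coprime i m :=
  Nat.coprime_of_dvd fun p hp h1 h2 => h p hp h2 (h1.trans hi)

lemma index_dvd_D {n : ℕ} {G : Subgroup (Perm (Fin n))}
    (h : (((numDerangements n : ℚ) / (Nat.factorial n : ℚ)).den : ℕ) ∣ Nat.card G) :
    G.index ∣ numDerangements n := by
  have hc : G.index * Nat.card G = n.factorial := by
    rw [Subgroup.index_mul_card, Nat.card_perm, Nat.card_fin]
  obtain ⟨t, ht⟩ := h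
  set q : ℚ := (numDerangements n : ℚ) / (Nat.factorial n : ℚ) with hq
  have hf : (n.factorial : ℚ) ≠ 0 := by exact_mod_cast Nat.factorial_ne_zero n
  have h1 : (numDerangements n : ℚ) = q * n.factorial := by rw [hq]; field_simp
  have h2 : q * q.den = q.num := Rat.mul_den_eq_num q
  have h3 : (numDerangements n : ℚ) = G.index * (q.num * t) := by
    rw [h1, ← hc, ht, ← h2]; push_cast; ring
  have h4 : (numDerangements n : ℤ) = G.index * (q.num * t) := by exact_mod_cast h3
  exact Int.natCast_dvd_natCast.1 ⟨_, h4⟩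

/-- transitivity -/
lemma transitive_of_coprime {n : ℕ} (hn : 0 < n) {G : Subgroup (Perm (Fin n))}
    (hc : Nat.Coprime G.index n) : IsPretransitive G (Fin n) := by
  let x : Fin n := ⟨0, hn⟩
  have h1 : n.choose (orbit G x).ncard ∣ G.index := by
    apply choose_dvd_index_s2
    intro h hh
    exact smul_orbit (⟨h, hh⟩ : G) x
  have hle : (orbit G x).ncard ≤ n := by
    have := Set.ncard_le_card (orbit G x)
    simpa using this
  have hpos : 0 < (orbit G x).ncard := by
    rw [Set.ncard_pos]; exact nonempty_orbit x
  generalize hk : (orbit G x).ncard = k at *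
  have hkn : k = n := by
    obtain ⟨n', rfl⟩ := Nat.exists_eq_succ_of_ne_zero hn.ne'
    obtain ⟨k', rfl⟩ := Nat.exists_eq_succ_of_ne_zero hpos.ne'
    have h2 := Nat.add_one_mul_choose_eq n' k'
    have h3 : (n' + 1) ∣ (n' + 1).choose (k' + 1) * (k' + 1) := Dvd.intro _ h2
    have h4 : Nat.Coprime (n' + 1) ((n' + 1).choose (k' + 1)) :=
      (Nat.Coprime.coprime_dvd_left h1 hc).symm
    have h5 := Nat.le_of_dvd (by omega) (h4.dvd_of_dvd_mul_left h3)
    omega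
  have huniv : orbit G x = Set.univ := by
    rw [Set.eq_univ_iff_ncard, hk, hkn, Nat.card_fin]
  exact (isPretransitive_iff_orbit_eq_univ x).2 huniv

lemma arith_block {a b i : ℕ} (ha : 3 ≤ a) (hb : 2 ≤ b)
    (hd : (a * b).choose a ∣ b * i) (hc2 : Nat.Coprime i (a * b - 2))
    (hc3 : Even (a * b) → Nat.Coprime i (a * b - 3)) : False := by
  obtain ⟨c, rfl⟩ : ∃ c, a = c + 2 := ⟨a - 2, by omega⟩
  obtain ⟨N, hN⟩ : ∃ N, (c + 2) * b = N + 3 := ⟨(c + 2) * b - 3, by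
    have : 6 ≤ (c + 2) * b := by nlinarith
    omega⟩
  rw [hN] at hd hc2 hc3
  have h1 := Nat.add_one_mul_choose_eq (N + 2) (c + 1)
  have hC : (N + 2).choose (c + 1) ∣ i := by
    have : (N + 3).choose (c + 2) = b * (N + 2).choose (c + 1) := by
      apply Nat.eq_of_mul_eq_mul_right (show 0 < c + 2 by omega)
      have h1' : (N + 3) * (N + 2).choose (c + 1) = (N + 3).choose (c + 2) * (c + 2) := h1
      rw [← h1', ← hN]; ring
    rw [this] at hd
    exact Nat.dvd_of_mul_dvd_mul_left (by omega) hd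
  have hC2 : Nat.Coprime ((N + 2).choose (c + 1)) (N + 1) :=
    Nat.Coprime.coprime_dvd_left hC hc2
  have hle : c + 2 ≤ N + 1 := by
    have : (c + 2) * 2 ≤ (c + 2) * b := Nat.mul_le_mul_left _ hb
    omega
  have h2 : (N + 1) ∣ (c + 1) * (N + 1 - c) := by
    have e1 : (N + 2) * (N + 1).choose c = (N + 2).choose (c + 1) * (c + 1) :=
      Nat.add_one_mul_choose_eq (N + 1) c
    have e2 : (N + 1) * N.choose c = (N + 1).choose c * (N + 1 - c) := by
      have := Nat.choose_mul_succ_eq N c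
      rw [← this]; ring
    have : (N + 1) ∣ (N + 2).choose (c + 1) * ((c + 1) * (N + 1 - c)) := by
      refine ⟨(N + 2) * N.choose c, ?_⟩
      calc _ = ((N + 2).choose (c + 1) * (c + 1)) * (N + 1 - c) := by ring
        _ = (N + 2) * ((N + 1).choose c * (N + 1 - c)) := by rw [← e1]; ring
        _ = _ := by rw [← e2]; ring
    exact hC2.symm.dvd_of_dvd_mul_left this
  have h3 : (N + 1) ∣ (c + 1) * c := by
    have : (c + 1) * (N + 1 - c) + (c + 1) * c = (N + 1) * (c + 1) := by
      rw [← mul_add, Nat.sub_add_cancel (by omega)]; ring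
    exact (Nat.dvd_add_right h2).1 (this ▸ Dvd.intro _ rfl)
  obtain ⟨t, ht⟩ := h3
  have hb2 : b = 2 ∧ c = 2 * t := by
    have hN' : ((c : ℤ) + 2) * b = N + 3 := by exact_mod_cast hN
    have ht' : ((c : ℤ) + 1) * c = (N + 1) * t := by exact_mod_cast ht
    have hN1 : (N : ℤ) + 1 = (c + 2) * b - 2 := by linarith
    rw [hN1] at ht'
    have hc1 : (1 : ℤ) ≤ c := by exact_mod_cast (show 1 ≤ c by omega)
    have hb' : (2 : ℤ) ≤ b := by exact_mod_cast hb
    have ht0 : (0 : ℤ) ≤ t := by positivity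
    obtain ⟨s, hs⟩ : ∃ s : ℤ, s = t * b - c + 1 := ⟨_, rfl⟩
    have hs2 : (c + 2) * s = 2 * (t : ℤ) + 2 := by rw [hs]; linear_combination -ht'
    have hspos : 0 < s := by
      by_contra hneg
      have : ((c : ℤ) + 2) * s ≤ 0 := mul_nonpos_of_nonneg_of_nonpos (by linarith) (by linarith)
      linarith
    rcases (show s = 1 ∨ 2 ≤ s by omega) with h | h
    · subst h
      have hct : (c : ℤ) = 2 * t := by linarith
      have : (b : ℤ) = 2 := by
        have ht1 : (0 : ℤ) < t := by linarith
        have : (t : ℤ) * (b - 2) = 0 := by rw [mul_sub]; linarith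
        rcases mul_eq_zero.1 this with h | h <;> linarith
      exact ⟨by exact_mod_cast this, by exact_mod_cast hct⟩
    · exfalso
      have h5 : (c : ℤ) + 1 ≤ t := by nlinarith
      have h6 : (c : ℤ) + 2 ≤ (c + 2) * b - 2 := by nlinarith
      nlinarith
  obtain ⟨rfl, rfl⟩ := hb2
  have ht1 : 1 ≤ t := by omega
  have hc3' := hc3 (by rw [← hN]; simp)
  have hN2 : N = 4 * t + 1 := by omega
  subst hN2
  obtain ⟨u, rfl⟩ : ∃ u, t = u + 1 := ⟨t - 1, by omega⟩
  have c1 := Nat.succ_mul_centralBinom_succ (2 * u + 3)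
  have c2 := Nat.succ_mul_centralBinom_succ (2 * u + 2)
  have c3 : (2 * u + 4).centralBinom = 2 * (4 * u + 7).choose (2 * u + 3) := by
    have := Nat.add_one_mul_choose_eq (4 * u + 7) (2 * u + 3)
    rw [Nat.centralBinom_eq_two_mul_choose]
    apply Nat.eq_of_mul_eq_mul_right (show 0 < 2 * u + 4 by omega)
    rw [show 2 * (2 * u + 4) = 4 * u + 7 + 1 by ring, ← this]; ring
  have hCi : (4 * u + 7).choose (2 * u + 3) ∣ i := by
    convert hC using 2 <;> ring
  have hcop : Nat.Coprime ((4 * u + 7).choose (2 * u + 3)) (4 * u + 5) := by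
    have := Nat.Coprime.coprime_dvd_left hCi hc3'
    convert this using 1; omega
  have hdv : (4 * u + 5) ∣ (4 * u + 7).choose (2 * u + 3) * (2 * ((2 * u + 3) * (2 * u + 4))) := by
    refine ⟨2 * (2 * (2 * u + 3) + 1) * (2 * (2 * u + 2).centralBinom), ?_⟩
    calc _ = (2 * u + 3) * ((2 * u + 3 + 1) * (2 * (4 * u + 7).choose (2 * u + 3))) := by ring
      _ = (2 * u + 3) * ((2 * u + 3 + 1) * (2 * u + 3 + 1).centralBinom) := by rw [← c3]
      _ = 2 * (2 * (2 * u + 3) + 1) * ((2 * u + 2 + 1) * (2 * u + 2 + 1).centralBinom) := by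
        rw [c1]; ring
      _ = _ := by rw [c2]; ring
  have hdv2 := hcop.symm.dvd_of_dvd_mul_left hdv
  have hdv3 : (4 * u + 5) ∣ 2 * u + 4 := by
    have : 2 * ((2 * u + 3) * (2 * u + 4)) = (4 * u + 5) * (2 * u + 4) + (2 * u + 4) := by ring
    rw [this] at hdv2
    exact (Nat.dvd_add_right (Dvd.intro _ rfl)).1 hdv2
  have := Nat.le_of_dvd (by omega) hdv3
  omega

lemma arith_block' {a b i n : ℕ} (ha : 3 ≤ a) (hb : 2 ≤ b) (hn : a * b = n)
    (hd : n.choose a ∣ b * i) (hc2 : Nat.Coprime i (n - 2))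
    (hc3 : Even n → Nat.Coprime i (n - 3)) : False := by
  subst hn
  exact arith_block ha hb hd hc2 hc3

/-- A block of size two is incompatible with a cycle of odd prime length. -/
lemma no_block_two {n : ℕ} {G : Subgroup (Perm (Fin n))} [IsPretransitive G (Fin n)]
    {B : Set (Fin n)} (hB : IsBlock G B) (hB2 : B.ncard = 2) {p : ℕ} (hp : p.Prime) (hp2 : p ≠ 2)
    {g : Perm (Fin n)} (hg : g ∈ G) (hgc : g.IsCycle) (hgp : g.support.card = p) : False := by
  obtain ⟨x₀, y₀, hne, rfl⟩ := Set.ncard_eq_two.1 hB2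
  obtain ⟨x, hx, -⟩ := id hgc
  obtain ⟨k, hk⟩ := exists_smul_eq G x₀ x
  have hB' : IsBlock G (k • ({x₀, y₀} : Set (Fin n))) := hB.translate k
  obtain ⟨y, hy⟩ : ∃ y, y = k • y₀ := ⟨_, rfl⟩
  have hset : k • ({x₀, y₀} : Set (Fin n)) = {x, y} := by
    rw [Set.smul_set_insert, Set.smul_set_singleton, hk, hy]
  rw [hset] at hB'
  have hxy : x ≠ y := by
    rw [← hk, hy]; intro h; exact hne (smul_left_cancel k h)
  have key : ∀ h ∈ G, (h x = y ∨ h y = y) → (h x = x ∨ h x = y) ∧ (h y = x ∨ h y = y) := by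
    intro h hh hor
    have hst : (⟨h, hh⟩ : G) • ({x, y} : Set (Fin n)) = {h x, h y} := by
      rw [Set.smul_set_insert, Set.smul_set_singleton]; rfl
    have heq : (⟨h, hh⟩ : G) • ({x, y} : Set (Fin n)) = {x, y} := by
      apply hB'.smul_eq_of_nonempty
      refine ⟨y, ?_, by simp⟩
      rw [hst]
      rcases hor with h | h <;> simp [h]
    rw [hst] at heq
    constructor
    · have : h x ∈ ({x, y} : Set (Fin n)) := by rw [← heq]; simp
      simpa using this
    · have : h y ∈ ({x, y} : Set (Fin n)) := by rw [← heq]; simp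
      simpa using this
  by_cases hgy : g y = y
  · rcases (key g hg (Or.inr hgy)).1 with h | h
    · exact hx h
    · exact hxy (g.injective (h.trans hgy.symm))
  · obtain ⟨j, hj⟩ := hgc.exists_pow_eq hx hgy
    have h2 := (key (g ^ j) (pow_mem hg j) (Or.inl hj)).2
    have h3 : (g ^ j) y = x := by
      rcases h2 with h | h
      · exact h
      · exact absurd ((g ^ j).injective (hj.trans h.symm)) hxy
    have h4 : (g ^ (j + j)) x = x := by
      rw [pow_add, Perm.mul_apply, hj, h3]
    have h5 : g ^ (j + j) = 1 := (hgc.pow_eq_one_iff' hx).2 h4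
    have h6 : p ∣ 2 * j := by
      rw [two_mul, ← hgp, ← hgc.orderOf]; exact orderOf_dvd_of_pow_eq_one h5
    have h7 : p ∣ j := by
      rcases hp.dvd_mul.1 h6 with h | h
      · exact absurd ((Nat.prime_dvd_prime_iff_eq hp Nat.prime_two).1 h) hp2
      · exact h
    have h8 : g ^ j = 1 := by
      rw [← orderOf_dvd_iff_pow_eq_one, hgc.orderOf, hgp]; exact h7
    rw [h8] at hj
    exact hxy hj

lemma primitive_of_index {n : ℕ} (hn : 5 ≤ n) {G : Subgroup (Perm (Fin n))}
    (hi : G.index ∣ numDerangements n) : IsPreprimitive G (Fin n) := by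
  have hc0 : Nat.Coprime G.index n := coprime_of_primes hi fun p hp h => not_dvd_D0 hp h
  have hc2 : Nat.Coprime G.index (n - 2) := coprime_of_primes hi fun p hp h => by
    have := not_dvd_D2 hp h
    rwa [Nat.sub_add_cancel (by omega)] at this
  have h3 : Even n → ∀ p, p.Prime → p ∣ n - 3 → p ≠ 2 ∧ ¬ p ∣ numDerangements n := by
    intro he p hp h
    have hp2 : p ≠ 2 := by
      rintro rfl
      obtain ⟨k, hk⟩ := he
      omega
    have := not_dvd_D3 hp h hp2
    rw [Nat.sub_add_cancel (by omega)] at this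
    exact ⟨hp2, this⟩
  have hc3 : Even n → Nat.Coprime G.index (n - 3) := fun he =>
    coprime_of_primes hi fun p hp h => (h3 he p hp h).2
  have htr : IsPretransitive G (Fin n) := transitive_of_coprime (by omega) hc0
  refine ⟨fun {B} hB => ?_⟩
  by_contra htriv
  have hsub : ¬ B.Subsingleton := fun h => htriv (Or.inl h)
  have huniv : B ≠ Set.univ := fun h => htriv (Or.inr h)
  have hne : B.Nonempty := by
    rw [Set.nonempty_iff_ne_empty]; rintro rfl; exact hsub Set.subsingleton_empty
  have hab := hB.ncard_block_mul_ncard_orbit_eq hne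
  rw [Nat.card_fin] at hab
  have hdv := choose_dvd_index_block G B
  have ha2 : 2 ≤ B.ncard := by
    by_contra h
    exact hsub ((Set.ncard_le_one_iff_subsingleton).1 (by omega))
  have hb2 : 2 ≤ (orbit G B).ncard := by
    by_contra h
    have : (orbit G B).ncard = 0 ∨ (orbit G B).ncard = 1 := by omega
    rcases this with h | h
    · rw [h] at hab; omega
    · rw [h, mul_one] at hab
      exact huniv (by rw [Set.eq_univ_iff_ncard, hab, Nat.card_fin])
  rcases ha2.eq_or_lt with h | h
  · have he : Even n := by rw [← hab, ← h]; simp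
    have hprime := Nat.minFac_prime (show n - 3 ≠ 1 by obtain ⟨k, hk⟩ := he; omega)
    have hdvd := Nat.minFac_dvd (n - 3)
    obtain ⟨k1, k2⟩ := h3 he _ hprime hdvd
    obtain ⟨g, hg, hgc, hgp⟩ := exists_cycle_mem G hprime
      ((Nat.le_of_dvd (by omega) hdvd).trans (by omega)) (fun hh => k2 (hh.trans hi))
    exact no_block_two hB h.symm hprime k1 hg hgc hgp
  · exact arith_block' h hb2 hab hdv hc2 hc3

lemma seven_case {G : Subgroup (Perm (Fin 7))} (hi : G.index ∣ numDerangements 7) :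
    alternatingGroup (Fin 7) ≤ G := by
  have hG := primitive_of_index (by norm_num) hi
  have hD : numDerangements 7 = 1854 := by decide
  rw [hD] at hi
  obtain ⟨g, hg, hgc, hgp⟩ := exists_cycle_mem G (p := 5) (by norm_num) (by norm_num)
    (fun h => by have := h.trans hi; norm_num at this)
  have ht := jordan_aux hG (p := 5) (m := 1) (by norm_num) (by norm_num) hgc hgp hg
  obtain ⟨s, hs⟩ : ∃ s : Set (Fin 7), s.ncard = 3 := ⟨{0, 1, 2}, by
    rw [Set.ncard_eq_toFinset_card']; rfl⟩
  have h1 := ht.index_of_fixingSubgroup_mul hs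
  rw [Nat.card_fin] at h1
  have h2 : (fixingSubgroup G s).index = 210 := by
    norm_num [Nat.factorial] at h1; omega
  have h3 : 210 ∣ Nat.card G := by
    rw [← h2]; exact Subgroup.index_dvd_card _
  have hc : G.index * Nat.card G = 5040 := by
    rw [Subgroup.index_mul_card, Nat.card_perm, Nat.card_fin]; rfl
  have h4 : G.index ∣ 24 := by
    obtain ⟨t, ht⟩ := h3
    rw [ht] at hc
    exact ⟨t, by nlinarith⟩
  have h5 : G.index ∣ 6 := Nat.dvd_gcd hi h4
  have h6 : G.index ≤ 6 := Nat.le_of_dvd (by norm_num) h5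
  have key : ∀ c : Perm (Fin 7), c ^ 7 = 1 → c ∈ G := by
    intro c hc
    apply G.normalCore_le
    rw [Subgroup.normalCore_eq_ker, MonoidHom.mem_ker]
    have k1 : orderOf (MulAction.toPermHom (Perm (Fin 7)) (Perm (Fin 7) ⧸ G) c) ∣ 7 := by
      apply orderOf_dvd_of_pow_eq_one
      rw [← map_pow, hc, map_one]
    have k2 : orderOf (MulAction.toPermHom (Perm (Fin 7)) (Perm (Fin 7) ⧸ G) c) ∣
        Nat.factorial 6 := by
      refine (orderOf_dvd_natCard _).trans ?_
      rw [Nat.card_perm]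
      exact Nat.factorial_dvd_factorial h6
    rw [← orderOf_eq_one_iff]
    have := Nat.dvd_gcd k1 k2
    exact Nat.dvd_one.1 (this.trans (by decide))
  let c : Perm (Fin 7) := finRotate 7
  have hc7 : c ^ 7 = 1 := by decide
  let d : Perm (Fin 7) := swap 0 1 * c * (swap 0 1)⁻¹
  have hd7 : d ^ 7 = 1 := by
    simp only [d]; rw [conj_pow, hc7]; simp
  have h3c : (c⁻¹ * d).IsThreeCycle := by
    rw [← card_support_eq_three_iff]; decide
  exact alternatingGroup_le_of_isPreprimitive_of_isThreeCycle_mem hG h3c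
    (mul_mem (inv_mem (key c hc7)) (key d hd7))

lemma main_le {n : ℕ} (hn : 5 ≤ n) {G : Subgroup (Perm (Fin n))}
    (hi : G.index ∣ numDerangements n) : alternatingGroup (Fin n) ≤ G := by
  have hG := primitive_of_index hn hi
  have fin : ∀ p : ℕ, p.Prime → p + 3 ≤ n → ¬ p ∣ numDerangements n →
      alternatingGroup (Fin n) ≤ G := by
    intro p hp hpn hpd
    obtain ⟨g, hg, hgc, hgp⟩ := exists_cycle_mem G hp (by omega) (fun h => hpd (h.trans hi))
    exact jordan_prime_cycle hG hp hpn hgc hgp hg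
  by_cases he : 2 ∣ n
  · exact fin 2 Nat.prime_two (by omega) (not_dvd_D0 Nat.prime_two he)
  by_cases h3 : ∃ r, r.Prime ∧ r ∣ n - 3 ∧ r ≠ 2
  · obtain ⟨r, hr, hrd, hr2⟩ := h3
    have := Nat.le_of_dvd (by omega) hrd
    have h' := not_dvd_D3 hr hrd hr2
    rw [Nat.sub_add_cancel (by omega)] at h'
    exact fin r hr (by omega) h'
  have hpow : n - 3 = 2 ^ (n - 3).primeFactorsList.length :=
    Nat.eq_prime_pow_of_unique_prime_dvd (by omega) fun {d} hd hdd => by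
      by_contra hne
      exact h3 ⟨d, hd, hdd, hne⟩
  generalize (n - 3).primeFactorsList.length = k at hpow
  rcases Nat.even_or_odd' k with ⟨l, rfl | rfl⟩
  · rcases (show l = 0 ∨ l = 1 ∨ 2 ≤ l by omega) with rfl | rfl | hl
    · simp at hpow; omega
    · have : n = 7 := by norm_num at hpow; omega
      subst this
      exact seven_case hi
    · obtain ⟨z, hz⟩ : ∃ z, 2 ^ l = z + 1 := ⟨2 ^ l - 1, by
        have : 0 < 2 ^ l := by positivity
        omega⟩
      have hz4 : 4 ≤ 2 ^ l := by
        calc 4 = 2 ^ 2 := by norm_num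
          _ ≤ 2 ^ l := Nat.pow_le_pow_right (by norm_num) hl
      have hn4 : n - 4 = z * (z + 2) := by
        have : 2 ^ (2 * l) = (z + 1) * (z + 1) := by rw [two_mul, pow_add, hz]
        have e : (z + 1) * (z + 1) = z * (z + 2) + 1 := by ring
        omega
      obtain ⟨w, hw1, hw3, hwd⟩ : ∃ w, w ≠ 1 ∧ ¬ 3 ∣ w ∧ w ∣ n - 4 := by
        by_cases hz3 : 3 ∣ z
        · exact ⟨z + 2, by omega, by omega, hn4 ▸ Dvd.intro_left _ rfl⟩
        · exact ⟨z, by omega, hz3, hn4 ▸ Dvd.intro _ rfl⟩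
      have hr := Nat.minFac_prime hw1
      have hrw := Nat.minFac_dvd w
      have hr3 : w.minFac ≠ 3 := fun h => hw3 (h ▸ hrw)
      have hle := Nat.le_of_dvd (by omega) (hrw.trans hwd)
      have h' := not_dvd_D4 hr (hrw.trans hwd) hr3
      rw [Nat.sub_add_cancel (by omega)] at h'
      exact fin _ hr (by omega) h'
  · skip
    have h32 : 3 ∣ n - 2 := by
      have e1 : n - 2 = 2 ^ (2 * l + 1) + 1 := by omega
      have e2 : 2 ^ (2 * l + 1) % 3 = 2 := by
        rw [pow_succ, pow_mul, Nat.mul_mod, Nat.pow_mod]; norm_num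
      omega
    have h' := not_dvd_D2 Nat.prime_three h32
    rw [Nat.sub_add_cancel (by omega)] at h'
    obtain ⟨g, hg, hgc, hgp⟩ := exists_cycle_mem G Nat.prime_three (by omega)
      (fun h => h' (h.trans hi))
    exact alternatingGroup_le_of_isPreprimitive_of_isThreeCycle_mem hG
      (card_support_eq_three_iff.1 hgp) hg

theorem denominator_of_derangement_proportion_divides_order
    (n : ℕ) (hn : 5 ≤ n) (G : Subgroup (Equiv.Perm (Fin n)))
    (h : (((numDerangements n : ℚ) / (Nat.factorial n : ℚ)).den : ℕ) ∣ Nat.card G) :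
    G = alternatingGroup (Fin n) ∨ G = ⊤ := by
  have hle := main_le hn (index_dvd_D h)
  have : Nontrivial (Fin n) := Fin.nontrivial_iff_two_le.2 (by omega)
  have h2 : G.index ∣ 2 := by
    rw [← alternatingGroup.index_eq_two (α := Fin n)]
    exact Subgroup.index_dvd_of_le hle
  rcases (Nat.dvd_prime Nat.prime_two).1 h2 with h | h
  · exact Or.inr (Subgroup.index_eq_one.1 h)
  · exact Or.inl (eq_alternatingGroup_of_index_eq_two h)
end
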